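/- Let f ∈ L¹(𝔻, dA) satisfy the BWMO condition. Then the average function f̂ is bounded on 𝔻 if and only if the Berezin transform f̃(z) = ∫_𝔻 f(w)·|k_z(w)|² dA(w) is bounded on 𝔻, where k_z(w) = (1 − |z|²)/(1 − w·z̄)². -/

import Mathlib

open MeasureTheory Set

noncomputable section

/-- The normalized area measure on the plane: planar Lebesgue measure divided by `π`. -/
def dA : Measure ℂ := (ENNReal.ofReal Real.pi)⁻¹ • volume

/-- The open unit disc `𝔻`. -/
def unitDisc : Set ℂ := {z : ℂ | ‖z‖ < 1}

/-- The argument `θ` of `z`, normalized to lie in `[0, 2π)`. -/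
def theta (z : ℂ) : ℝ := toIcoMod Real.two_pi_pos 0 (Complex.arg z)

/-- The angle of `ζ`, normalized to lie in `[theta z, theta z + 2π)`;
for `ζ ∈ B(z)` this is the angle `θ̃ ∈ [θ, θ + π(1-r)]` of the paper's convention. -/
def angFrom (z ζ : ℂ) : ℝ := toIcoMod Real.two_pi_pos (theta z) (Complex.arg ζ)

/-- The polar rectangle `{ρ e^{iφ} : r₁ ≤ ρ ≤ r₂, φ₁ ≤ φ ≤ φ₂}`. -/
def polarRect (r₁ r₂ φ₁ φ₂ : ℝ) : Set ℂ :=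
  {w : ℂ | ∃ ρ φ : ℝ, r₁ ≤ ρ ∧ ρ ≤ r₂ ∧ φ₁ ≤ φ ∧ φ ≤ φ₂ ∧
    w = (ρ : ℂ) * Complex.exp ((φ : ℂ) * Complex.I)}

/-- The set `B(z)` for `z = r e^{iθ} ∈ 𝔻`. -/
def Bz (z : ℂ) : Set ℂ :=
  polarRect ‖z‖ (1 - (1 - ‖z‖) / 2) (theta z) (theta z + Real.pi * (1 - ‖z‖))

/-- The set `B(z, ζ)` for `ζ ∈ B(z)`. -/
def Bzz (z ζ : ℂ) : Set ℂ := polarRect ‖z‖ ‖ζ‖ (theta z) (angFrom z ζ)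

/-- The set `B(ζ₁, ζ₂)` for points `ζ₁ ≾ ζ₂` of `B(z)`. -/
def Bsub (z ζ₁ ζ₂ : ℂ) : Set ℂ := polarRect ‖ζ₁‖ ‖ζ₂‖ (angFrom z ζ₁) (angFrom z ζ₂)

/-- The relation `ζ₁ ≾ ζ₂` for points of `B(z)`: `ρ₁ ≤ ρ₂` and `φ₁ ≤ φ₂`. -/
def precSim (z ζ₁ ζ₂ : ℂ) : Prop := ‖ζ₁‖ ≤ ‖ζ₂‖ ∧ angFrom z ζ₁ ≤ angFrom z ζ₂

/-- The average `f̂_K = (1/|K|) ∫_K f dA` of `f` over a set `K`. -/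
def avgOn (f : ℂ → ℂ) (K : Set ℂ) : ℂ := ((dA K).toReal)⁻¹ • ∫ w in K, f w ∂dA

/-- The average function `f̂(z) = f̂_{B(z)}`. -/
def avg (f : ℂ → ℂ) (z : ℂ) : ℂ := avgOn f (Bz z)

/-- The quantity `(1/|B(z)|) |∫_{B(z,ζ)} (f(ξ) - f̂(z)) dA(ξ)|`. -/
def wQuot (f : ℂ → ℂ) (z ζ : ℂ) : ℝ :=
  ((dA (Bz z)).toReal)⁻¹ * ‖∫ ξ in Bzz z ζ, (f ξ - avg f z) ∂dA‖

/-- The BWMO condition: `‖f‖_BWMO < ∞`. -/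
def IsBWMO (f : ℂ → ℂ) : Prop := ∃ C : ℝ, ∀ z ∈ unitDisc, ∀ ζ ∈ Bz z, wQuot f z ζ ≤ C

/-- The BWMO seminorm `‖f‖_BWMO`. -/
def bwmoNorm (f : ℂ → ℂ) : ℝ :=
  sSup {c : ℝ | ∃ z ∈ unitDisc, ∃ ζ ∈ Bz z, c = wQuot f z ζ}

/-- The VWMO condition:
`(1/|B(z)|) sup_{ζ ∈ B(z)} |∫_{B(z,ζ)} (f - f̂(z)) dA| → 0` as `|z| → 1`. -/
def IsVWMO (f : ℂ → ℂ) : Prop :=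
  ∀ ε > (0:ℝ), ∃ r₀ < (1:ℝ), ∀ z ∈ unitDisc, r₀ ≤ ‖z‖ → ∀ ζ ∈ Bz z, wQuot f z ζ ≤ ε

/-- The Bergman-metric disc `D(z,1)` of radius `1` centered at `z`. -/
def Dball (z : ℂ) : Set ℂ :=
  {w : ℂ | ‖w‖ < 1 ∧ ‖(z - w) / (1 - (starRingEnd ℂ) w * z)‖ < Real.tanh 1}

/-- The hyperbolic average `f̂₁(z) = (1/|D(z,1)|) ∫_{D(z,1)} f dA` of a real-valued `f`. -/
def avg1 (f : ℂ → ℝ) (z : ℂ) : ℝ := ((dA (Dball z)).toReal)⁻¹ * ∫ w in Dball z, f w ∂dA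

/-- The mean oscillation `(1/|D(z,1)|) ∫_{D(z,1)} |f - f̂₁(z)| dA` of a real-valued `f`. -/
def meanOsc1 (f : ℂ → ℝ) (z : ℂ) : ℝ :=
  ((dA (Dball z)).toReal)⁻¹ * ∫ ξ in Dball z, |f ξ - avg1 f z| ∂dA

/-- The Berezin transform `f̃(z) = ∫_𝔻 f(w) |k_z(w)|² dA(w)`,
where `k_z(w) = (1-|z|²)/(1-w z̄)²`. -/
def berezin (f : ℂ → ℂ) (z : ℂ) : ℂ :=
  ∫ w in unitDisc, f w * ((((1 - ‖z‖ ^ 2) ^ 2 / ‖1 - w * (starRingEnd ℂ) z‖ ^ 4 : ℝ)) : ℂ) ∂dA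

/-- The example symbol of Section 4:
`f(r e^{iθ}) = (1/(r (1-r)^{b-β})) sin(1/(1-r)^b)` for `r ≥ 1/2`, and `1` for `r < 1/2`. -/
def fEx (b β : ℝ) (z : ℂ) : ℝ :=
  if ‖z‖ < 1 / 2 then 1
  else (1 / (‖z‖ * (1 - ‖z‖) ^ (b - β))) * Real.sin (1 / (1 - ‖z‖) ^ b)

end

/-!
The point is that `berezin f - avg f` is bounded. As `|k_z|²` has total mass one, this difference
at `z` is `∫ |k_z|² (f - avg f z) dA`, and only the annulus `1/2 < |w| < 1` matters. Write
`x = 1 - |z|` and work in polar coordinates. Chaining overlapping boxes, BWMO shows that the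
averages over two boxes of depths `x` and `y` within distance `L ≥ x, y` of each other differ by
`O(√(L / x) + √(L / y))`. Boxes of depths `y = 2⁻ⁿ⁻¹` tile the annulus; let `L` be comparable to
`|1 - w z̄|` on such a tile. Integrating by parts in both variables bounds the integral of
`|k_z|²` against `f` minus its average over the tile by the size `x² / L⁴` of the kernel times the
oscillation `O(y²)`, since only signed integrals of `f` over subrectangles enter. The sum over all
tiles of `L⁻⁴ (√(L / x) + √(L / y)) y²` is `O(1 / x²)`, by comparison with an integral, and this
cancels the factor `x²`.
-/

section PolarCoordinates

variable {E : Type*} [NormedAddCommGroup E] [NormedSpace ℝ E] {s : Set (ℝ × ℝ)}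

/-- The polar parametrization `(ρ, φ) ↦ ρ e^{iφ}` of the plane, with no restriction on the angle:
unlike the partial homeomorphism `Complex.polarCoord.symm` it is used on angular windows
`(c, c + 2π]` with arbitrary `c`. -/
noncomputable def polarMap (p : ℝ × ℝ) : ℂ := (p.1 : ℂ) * Complex.exp ((p.2 : ℂ) * Complex.I)

lemma polarMap_eq_symm_polarCoord (p : ℝ × ℝ) :
    polarMap p = Complex.measurableEquivRealProd.symm (polarCoord.symm p) := by
  rw [Complex.measurableEquivRealProd_symm_polarCoord_symm_apply, Complex.polarCoord_symm_apply,
    polarMap, Complex.exp_mul_I]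
  push_cast
  rfl

lemma image_polarMap_eq (s : Set (ℝ × ℝ)) :
    polarMap '' s = Complex.measurableEquivRealProd.symm '' (polarCoord.symm '' s) := by
  rw [image_image]
  exact image_congr fun p _ ↦ polarMap_eq_symm_polarCoord p

lemma norm_polarMap {p : ℝ × ℝ} (hp : 0 ≤ p.1) : ‖polarMap p‖ = p.1 := by
  simp [polarMap, Complex.norm_exp_ofReal_mul_I, abs_of_nonneg hp]

lemma polarMap_norm_arg (w : ℂ) : polarMap (‖w‖, w.arg) = w :=
  Complex.norm_mul_exp_arg_mul_I w

lemma polarMap_add_int_mul_two_pi (r θ : ℝ) (n : ℤ) :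
    polarMap (r, θ + n * (2 * Real.pi)) = polarMap (r, θ) := by
  rw [polarMap, polarMap, Complex.exp_eq_exp_iff_exists_int.2 ⟨n, ?_⟩]
  push_cast
  ring

lemma polarMap_toIocMod_arg (c : ℝ) (w : ℂ) :
    polarMap (‖w‖, toIocMod Real.two_pi_pos c w.arg) = w := by
  rw [← polarMap_add_int_mul_two_pi _ _ (toIocDiv Real.two_pi_pos c w.arg), ← zsmul_eq_mul,
    toIocMod_add_toIocDiv_zsmul, polarMap_norm_arg]

lemma polarMap_toIcoMod_arg (c : ℝ) (w : ℂ) :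
    polarMap (‖w‖, toIcoMod Real.two_pi_pos c w.arg) = w := by
  rw [← polarMap_add_int_mul_two_pi _ _ (toIcoDiv Real.two_pi_pos c w.arg), ← zsmul_eq_mul,
    toIcoMod_add_toIcoDiv_zsmul, polarMap_norm_arg]

lemma exists_int_of_polarMap_eq {p q : ℝ × ℝ} (hp : 0 < p.1) (hq : 0 < q.1)
    (h : polarMap p = polarMap q) :
    p.1 = q.1 ∧ ∃ n : ℤ, p.2 = q.2 + n * (2 * Real.pi) := by
  have hfst : p.1 = q.1 := by rw [← norm_polarMap hp.le, ← norm_polarMap hq.le, h]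
  have hexp : Complex.exp (p.2 * Complex.I) = Complex.exp (q.2 * Complex.I) := by
    rw [polarMap, polarMap, hfst] at h
    exact mul_left_cancel₀ (by exact_mod_cast hq.ne') h
  obtain ⟨n, hn⟩ := Complex.exp_eq_exp_iff_exists_int.1 hexp
  refine ⟨hfst, n, ?_⟩
  have hsnd : (p.2 : ℂ) = q.2 + n * (2 * Real.pi) :=
    mul_right_cancel₀ Complex.I_ne_zero (hn.trans (by ring))
  exact_mod_cast hsnd

lemma injOn_polarMap {c d : ℝ} (hcd : d - c ≤ 2 * Real.pi) :
    InjOn polarMap (Ioi 0 ×ˢ Ioc c d) := by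
  rintro ⟨r, θ⟩ ⟨hr, hθ⟩ ⟨r', θ'⟩ ⟨hr', hθ'⟩ h
  obtain ⟨hfst, n, hn⟩ := exists_int_of_polarMap_eq (p := (r, θ)) (q := (r', θ')) hr hr' h
  simp only [mem_Ioc] at hfst hn hθ hθ'
  have hlt : n < 1 := by
    by_contra! hc
    have : (1 : ℝ) ≤ n := by exact_mod_cast hc
    nlinarith [Real.pi_pos]
  have hgt : -1 < n := by
    by_contra! hc
    have : (n : ℝ) ≤ -1 := by exact_mod_cast hc
    nlinarith [Real.pi_pos]
  obtain rfl : n = 0 := by omega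
  simp [hfst, hn]

lemma injOn_symm_polarCoord (hs : InjOn polarMap s) : InjOn polarCoord.symm s :=
  fun p hp q hq h ↦ hs hp hq (by simp only [polarMap_eq_symm_polarCoord, h])

lemma setIntegral_image_polarMap (hs : MeasurableSet s) (hpos : ∀ p ∈ s, 0 < p.1)
    (hinj : InjOn polarMap s) (F : ℂ → E) :
    ∫ w in polarMap '' s, F w = ∫ p in s, p.1 • F (polarMap p) := by
  rw [image_polarMap_eq, Complex.volume_preserving_equiv_real_prod.symm.setIntegral_image_emb
      Complex.measurableEquivRealProd.symm.measurableEmbedding,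
    integral_image_eq_integral_abs_det_fderiv_smul volume hs
      (fun p _ ↦ (hasFDerivAt_polarCoord_symm p).hasFDerivWithinAt) (injOn_symm_polarCoord hinj)]
  refine setIntegral_congr_fun hs fun p hp ↦ ?_
  simp only [det_fderivPolarCoordSymm, abs_of_pos (hpos p hp), polarMap_eq_symm_polarCoord]

lemma integrableOn_image_polarMap_iff (hs : MeasurableSet s) (hpos : ∀ p ∈ s, 0 < p.1)
    (hinj : InjOn polarMap s) {F : ℂ → E} :
    IntegrableOn F (polarMap '' s) ↔ IntegrableOn (fun p ↦ p.1 • F (polarMap p)) s := by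
  rw [image_polarMap_eq, Complex.volume_preserving_equiv_real_prod.symm.integrableOn_image
      Complex.measurableEquivRealProd.symm.measurableEmbedding,
    integrableOn_image_iff_integrableOn_abs_det_fderiv_smul volume hs
      (fun p _ ↦ (hasFDerivAt_polarCoord_symm p).hasFDerivWithinAt) (injOn_symm_polarCoord hinj)]
  refine integrableOn_congr_fun (fun p hp ↦ ?_) hs
  simp only [det_fderivPolarCoordSymm, abs_of_pos (hpos p hp), polarMap_eq_symm_polarCoord,
    Function.comp]

lemma volume_image_polarMap_eq_zero (hs : volume s = 0) : volume (polarMap '' s) = 0 := by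
  rw [image_polarMap_eq, MeasurableEquiv.image_symm,
    Complex.volume_preserving_equiv_real_prod.measure_preimage_equiv]
  exact addHaar_image_eq_zero_of_differentiableOn_of_addHaar_eq_zero volume
    (fun p _ ↦ (hasFDerivAt_polarCoord_symm p).differentiableAt.differentiableWithinAt) hs

/-- The open annulus `{a < |w| < b}` centred at the origin, the image of polar rectangles of
angular width `2π`. -/
def annulus (a b : ℝ) : Set ℂ := {w | a < ‖w‖ ∧ ‖w‖ < b}

lemma image_polarMap_Ioo_prod_Ioc {a : ℝ} (ha : 0 ≤ a) (b c : ℝ) :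
    polarMap '' (Ioo a b ×ˢ Ioc c (c + 2 * Real.pi)) = annulus a b := by
  ext w
  constructor
  · rintro ⟨p, ⟨hp, -⟩, rfl⟩
    rwa [annulus, mem_ofPred_eq, norm_polarMap (ha.trans hp.1.le)]
  · exact fun hw ↦ ⟨(‖w‖, _), ⟨hw, toIocMod_mem_Ioc _ _ _⟩, polarMap_toIocMod_arg c w⟩

lemma polarRect_eq_image (a b c d : ℝ) :
    polarRect a b c d = polarMap '' (Icc a b ×ˢ Icc c d) := by
  ext w
  simp only [polarRect, polarMap, mem_image, mem_prod, mem_Icc, Prod.exists, mem_ofPred_eq]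
  grind

lemma Icc_prod_Icc_ae_eq_Ioc_prod_Ioc (a b c d : ℝ) :
    (Icc a b ×ˢ Icc c d : Set (ℝ × ℝ)) =ᵐ[volume] Ioc a b ×ˢ Ioc c d :=
  Measure.set_prod_ae_eq Ioc_ae_eq_Icc.symm Ioc_ae_eq_Icc.symm

lemma polarRect_ae_eq_image (a b c d : ℝ) :
    polarRect a b c d =ᵐ[volume] polarMap '' (Ioc a b ×ˢ Ioc c d) := by
  rw [polarRect_eq_image]
  have hsub : (Ioc a b ×ˢ Ioc c d : Set (ℝ × ℝ)) ⊆ Icc a b ×ˢ Icc c d :=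
    prod_mono Ioc_subset_Icc_self Ioc_subset_Icc_self
  have hnull : volume ((Icc a b ×ˢ Icc c d : Set (ℝ × ℝ)) \ Ioc a b ×ˢ Ioc c d) = 0 :=
    ae_le_set.1 (Icc_prod_Icc_ae_eq_Ioc_prod_Ioc a b c d).le
  refine Filter.EventuallyLE.antisymm ?_ (image_mono hsub).eventuallyLE
  refine ae_le_set.2 (measure_mono_null ?_ (volume_image_polarMap_eq_zero hnull))
  rintro _ ⟨⟨p, hp, rfl⟩, hn⟩
  exact mem_image_of_mem polarMap ⟨hp, fun h ↦ hn (mem_image_of_mem polarMap h)⟩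

end PolarCoordinates

section AreaMeasure

variable {E : Type*} [NormedAddCommGroup E] [NormedSpace ℝ E]

lemma setIntegral_dA (s : Set ℂ) (F : ℂ → E) :
    ∫ w in s, F w ∂dA = Real.pi⁻¹ • ∫ w in s, F w := by
  rw [dA, Measure.restrict_smul, integral_smul_measure, ENNReal.toReal_inv,
    ENNReal.toReal_ofReal Real.pi_pos.le]

lemma integrableOn_dA_iff {E : Type*} [NormedAddCommGroup E] {s : Set ℂ} {F : ℂ → E} :
    IntegrableOn F s dA ↔ IntegrableOn F s := by
  rw [IntegrableOn, dA, Measure.restrict_smul]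
  exact integrable_smul_measure (by simp) (by simp [Real.pi_pos])

lemma setIntegral_annulus_dA {a : ℝ} (ha : 0 ≤ a) (b c : ℝ) (F : ℂ → E) :
    ∫ w in annulus a b, F w ∂dA =
      Real.pi⁻¹ • ∫ p in Ioo a b ×ˢ Ioc c (c + 2 * Real.pi), p.1 • F (polarMap p) := by
  rw [setIntegral_dA, ← image_polarMap_Ioo_prod_Ioc ha b c,
    setIntegral_image_polarMap (measurableSet_Ioo.prod measurableSet_Ioc)]
  · exact fun p hp ↦ ha.trans_lt hp.1.1
  · exact (injOn_polarMap (by simp)).mono (prod_mono (fun x hx ↦ ha.trans_lt hx.1) subset_rfl)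

lemma integrableOn_annulus_iff {a : ℝ} (ha : 0 ≤ a) (b c : ℝ) {F : ℂ → E} :
    IntegrableOn F (annulus a b) dA ↔ IntegrableOn (fun p ↦ p.1 • F (polarMap p))
      (Ioo a b ×ˢ Ioc c (c + 2 * Real.pi)) := by
  rw [integrableOn_dA_iff, ← image_polarMap_Ioo_prod_Ioc ha b c,
    integrableOn_image_polarMap_iff (measurableSet_Ioo.prod measurableSet_Ioc)]
  · exact fun p hp ↦ ha.trans_lt hp.1.1
  · exact (injOn_polarMap (by simp)).mono (prod_mono (fun x hx ↦ ha.trans_lt hx.1) subset_rfl)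

lemma setIntegral_polarRect_dA {a b c d : ℝ} (ha : 0 ≤ a) (hcd : d - c ≤ 2 * Real.pi)
    (F : ℂ → E) :
    ∫ w in polarRect a b c d, F w ∂dA =
      Real.pi⁻¹ • ∫ p in Ioc a b ×ˢ Ioc c d, p.1 • F (polarMap p) := by
  rw [setIntegral_dA, setIntegral_congr_set (polarRect_ae_eq_image a b c d),
    setIntegral_image_polarMap (measurableSet_Ioc.prod measurableSet_Ioc)]
  · exact fun p hp ↦ ha.trans_lt hp.1.1
  · exact (injOn_polarMap hcd).mono (prod_mono (fun x hx ↦ ha.trans_lt hx.1) subset_rfl)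

end AreaMeasure

section CarlesonBoxes

variable {f : ℂ → ℂ} {z : ℂ}

lemma polarMap_norm_theta (z : ℂ) : polarMap (‖z‖, theta z) = z :=
  polarMap_toIcoMod_arg 0 z

lemma polarRect_add_int_mul_two_pi (a b c d : ℝ) (n : ℤ) :
    polarRect a b (c + n * (2 * Real.pi)) (d + n * (2 * Real.pi)) = polarRect a b c d := by
  rw [polarRect_eq_image, polarRect_eq_image, ← Set.image_add_const_Icc]
  ext w
  simp only [mem_image, mem_prod, Prod.exists]
  constructor
  · rintro ⟨ρ, _, ⟨hρ, φ, hφ, rfl⟩, rfl⟩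
    exact ⟨ρ, φ, ⟨hρ, hφ⟩, (polarMap_add_int_mul_two_pi ρ φ n).symm⟩
  · rintro ⟨ρ, φ, ⟨hρ, hφ⟩, rfl⟩
    exact ⟨ρ, _, ⟨hρ, φ, hφ, rfl⟩, polarMap_add_int_mul_two_pi ρ φ n⟩

lemma exists_int_theta_polarMap {r : ℝ} (hr : 0 < r) (θ : ℝ) :
    ∃ n : ℤ, theta (polarMap (r, θ)) = θ + n * (2 * Real.pi) := by
  have h := polarMap_norm_theta (polarMap (r, θ))
  rw [norm_polarMap hr.le] at h
  exact (exists_int_of_polarMap_eq (p := (r, theta _)) (q := (r, θ)) hr hr h).2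

lemma Bz_polarMap {r : ℝ} (hr : 0 < r) (θ : ℝ) :
    Bz (polarMap (r, θ)) = polarRect r (1 - (1 - r) / 2) θ (θ + Real.pi * (1 - r)) := by
  obtain ⟨n, hn⟩ := exists_int_theta_polarMap hr θ
  rw [Bz, hn, norm_polarMap hr.le, add_right_comm, polarRect_add_int_mul_two_pi]

lemma angFrom_polarMap {r s θ t : ℝ} {n : ℤ} (hs : 0 < s) (hθt : θ ≤ t)
    (htθ : t < θ + 2 * Real.pi) (hn : theta (polarMap (r, θ)) = θ + n * (2 * Real.pi)) :
    angFrom (polarMap (r, θ)) (polarMap (s, t)) = t + n * (2 * Real.pi) := by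
  have h := polarMap_norm_arg (polarMap (s, t))
  rw [norm_polarMap hs.le] at h
  obtain ⟨m, hm⟩ :=
    (exists_int_of_polarMap_eq (p := (s, Complex.arg _)) (q := (s, t)) hs hs h).2
  rw [angFrom, hn, toIcoMod_eq_iff]
  refine ⟨⟨by linarith, by linarith⟩, m - n, hm.trans ?_⟩
  rw [zsmul_eq_mul]
  push_cast
  ring

lemma Bzz_polarMap {r s θ t : ℝ} (hr : 0 < r) (hs : 0 < s) (hθt : θ ≤ t)
    (htθ : t < θ + 2 * Real.pi) :
    Bzz (polarMap (r, θ)) (polarMap (s, t)) = polarRect r s θ t := by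
  obtain ⟨n, hn⟩ := exists_int_theta_polarMap hr θ
  rw [Bzz, hn, norm_polarMap hr.le, norm_polarMap hs.le, angFrom_polarMap hs hθt htθ hn,
    polarRect_add_int_mul_two_pi]

lemma setIntegral_fst_Ioc_prod_Ioc {a b c d : ℝ} (hab : a ≤ b) (hcd : c ≤ d) :
    ∫ p in (Ioc a b ×ˢ Ioc c d : Set (ℝ × ℝ)), p.1 = (b ^ 2 - a ^ 2) / 2 * (d - c) := by
  have h := setIntegral_prod_mul (μ := (volume : Measure ℝ)) (ν := (volume : Measure ℝ))
    (fun ρ : ℝ ↦ ρ) (fun _ : ℝ ↦ (1 : ℝ)) (Ioc a b) (Ioc c d)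
  simp only [mul_one] at h
  rw [Measure.volume_eq_prod, h, ← intervalIntegral.integral_of_le hab, integral_id]
  simp [hcd]

lemma toReal_dA_polarRect {a b c d : ℝ} (ha : 0 ≤ a) (hab : a ≤ b) (hcd : c ≤ d)
    (hwidth : d - c ≤ 2 * Real.pi) :
    (dA (polarRect a b c d)).toReal = Real.pi⁻¹ * ((b ^ 2 - a ^ 2) / 2 * (d - c)) := by
  have h := setIntegral_polarRect_dA ha hwidth (b := b) (fun _ ↦ (1 : ℝ))
  simpa [setIntegral_fst_Ioc_prod_Ioc hab hcd, Measure.real] using h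

lemma toReal_dA_Bz (hz : z ∈ unitDisc) :
    (dA (Bz z)).toReal = (1 - ‖z‖) ^ 2 * (4 - 3 * (1 - ‖z‖)) / 8 := by
  have hz' : ‖z‖ < 1 := hz
  have hpi := Real.pi_pos
  rw [Bz, toReal_dA_polarRect (norm_nonneg z) (by linarith) (by nlinarith)
    (by nlinarith [norm_nonneg z])]
  field_simp
  ring

lemma sq_div_eight_le_toReal_dA_Bz (hz : z ∈ unitDisc) :
    (1 - ‖z‖) ^ 2 / 8 ≤ (dA (Bz z)).toReal := by
  rw [toReal_dA_Bz hz]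
  nlinarith [mul_nonneg (sq_nonneg (1 - ‖z‖)) (norm_nonneg z)]

lemma toReal_dA_Bz_le (hz : z ∈ unitDisc) : (dA (Bz z)).toReal ≤ (1 - ‖z‖) ^ 2 := by
  have hz' : ‖z‖ < 1 := hz
  rw [toReal_dA_Bz hz]
  nlinarith [sq_nonneg (1 - ‖z‖), mul_nonneg (sq_nonneg (1 - ‖z‖)) (sub_pos.2 hz').le]

lemma Bz_subset_unitDisc (hz : z ∈ unitDisc) : Bz z ⊆ unitDisc := by
  have hz' : ‖z‖ < 1 := hz
  rw [Bz, polarRect_eq_image]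
  rintro _ ⟨p, ⟨hp, -⟩, rfl⟩
  rw [unitDisc, mem_ofPred_eq, norm_polarMap ((norm_nonneg z).trans hp.1)]
  linarith [hp.2]

lemma norm_avg_le (hf : IntegrableOn f unitDisc dA) (hz : z ∈ unitDisc) :
    ‖avg f z‖ ≤ 8 / (1 - ‖z‖) ^ 2 * ∫ w in unitDisc, ‖f w‖ ∂dA := by
  have hx : 0 < 1 - ‖z‖ := sub_pos.2 hz
  have hmass : ‖∫ w in Bz z, f w ∂dA‖ ≤ ∫ w in unitDisc, ‖f w‖ ∂dA :=
    (norm_integral_le_integral_norm _).trans <| setIntegral_mono_set hf.norm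
      (ae_of_all _ fun _ ↦ norm_nonneg _) (Bz_subset_unitDisc hz).eventuallyLE
  rw [avg, avgOn, norm_smul, norm_inv, Real.norm_of_nonneg ENNReal.toReal_nonneg]
  gcongr
  rw [← inv_div]
  exact inv_anti₀ (by positivity) (sq_div_eight_le_toReal_dA_Bz hz)

end CarlesonBoxes

section RectangleIntegrals

variable {E : Type*} [NormedAddCommGroup E] [NormedSpace ℝ E] {G : ℝ × ℝ → E}
  {a b e : ℝ} {T : Set ℝ}

lemma setIntegral_Ioc_prod_eq_add (hT : MeasurableSet T) (hab : a ≤ b) (hbe : b ≤ e)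
    (hG : IntegrableOn G (Ioc a e ×ˢ T)) :
    ∫ p in Ioc a e ×ˢ T, G p = (∫ p in Ioc a b ×ˢ T, G p) + ∫ p in Ioc b e ×ˢ T, G p := by
  rw [← Ioc_union_Ioc_eq_Ioc hab hbe, union_prod] at *
  exact setIntegral_union (disjoint_prod.2 (.inl (Ioc_disjoint_Ioc_of_le le_rfl)))
    (measurableSet_Ioc.prod hT) hG.left_of_union hG.right_of_union

lemma setIntegral_prod_Ioc_eq_add (hT : MeasurableSet T) (hab : a ≤ b) (hbe : b ≤ e)
    (hG : IntegrableOn G (T ×ˢ Ioc a e)) :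
    ∫ p in T ×ˢ Ioc a e, G p = (∫ p in T ×ˢ Ioc a b, G p) + ∫ p in T ×ˢ Ioc b e, G p := by
  rw [← Ioc_union_Ioc_eq_Ioc hab hbe, prod_union] at *
  exact setIntegral_union (disjoint_prod.2 (.inr (Ioc_disjoint_Ioc_of_le le_rfl)))
    (hT.prod measurableSet_Ioc) hG.left_of_union hG.right_of_union

lemma setIntegral_Ioc_prod_Ioc_eq_sub {a₀ a b c₀ c d : ℝ} (ha : a₀ ≤ a) (hab : a ≤ b)
    (hc : c₀ ≤ c) (hcd : c ≤ d) (hG : IntegrableOn G (Ioc a₀ b ×ˢ Ioc c₀ d)) :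
    ∫ p in Ioc a b ×ˢ Ioc c d, G p =
      ((∫ p in Ioc a₀ b ×ˢ Ioc c₀ d, G p) - ∫ p in Ioc a₀ a ×ˢ Ioc c₀ d, G p) -
        ((∫ p in Ioc a₀ b ×ˢ Ioc c₀ c, G p) - ∫ p in Ioc a₀ a ×ˢ Ioc c₀ c, G p) := by
  rw [setIntegral_Ioc_prod_eq_add measurableSet_Ioc ha hab hG,
    setIntegral_Ioc_prod_eq_add measurableSet_Ioc ha hab
      (hG.mono_set (prod_mono subset_rfl (Ioc_subset_Ioc_right hcd))),
    setIntegral_prod_Ioc_eq_add measurableSet_Ioc hc hcd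
      (hG.mono_set (prod_mono (Ioc_subset_Ioc_left ha) subset_rfl))]
  abel

lemma integrableOn_fst_smul_const (a b c d : ℝ) (v : E) :
    IntegrableOn (fun p : ℝ × ℝ ↦ p.1 • v) (Ioc a b ×ˢ Ioc c d) :=
  (ContinuousOn.integrableOn_compact (isCompact_Icc.prod isCompact_Icc) (by fun_prop)).mono_set
    (prod_mono Ioc_subset_Icc_self Ioc_subset_Icc_self)

end RectangleIntegrals

section PolarOscillation

variable {E : Type*} [NormedAddCommGroup E] [NormedSpace ℝ E] {h : ℝ × ℝ → E} {A : ℝ → ℝ → E}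
  {C x y θ φ L : ℝ} {p q : ℝ × ℝ}

/-- The box `B(z)` of the point `z = (1 - x) e^{iθ}` in polar coordinates. -/
def polarBox (x θ : ℝ) : Set (ℝ × ℝ) := Icc (1 - x) (1 - x / 2) ×ˢ Icc θ (θ + Real.pi * x)

/-- The BWMO condition near the boundary in polar coordinates. Here `h` plays the role of
`ρ f(ρ e^{iφ})` and `A x θ` that of the average of `f` over the box of `(1 - x) e^{iθ}`. The same
constant bounds the oscillations and the averages over the boxes with corner on `|z| = 1/2`. -/
structure PolarBWMO (h : ℝ × ℝ → E) (A : ℝ → ℝ → E) (C : ℝ) : Prop where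
  integrableOn (c : ℝ) : IntegrableOn h (Ioo (1 / 2) 1 ×ˢ Ioc c (c + 2 * Real.pi))
  norm_setIntegral_le {x θ : ℝ} (hx : 0 < x) (hx' : x ≤ 1 / 2) {q : ℝ × ℝ}
    (hq : q ∈ polarBox x θ) :
    ‖∫ p in Ioc (1 - x) q.1 ×ˢ Ioc θ q.2, (h p - p.1 • A x θ)‖ ≤ C * x ^ 2
  norm_half_le (θ : ℝ) : ‖A (1 / 2) θ‖ ≤ C

namespace PolarBWMO

lemma nonneg (H : PolarBWMO h A C) : 0 ≤ C := (norm_nonneg _).trans (H.norm_half_le 0)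

lemma integrableOn_sub (H : PolarBWMO h A C) {a b c d : ℝ} (v : E) (ha : 1 / 2 ≤ a) (hb : b < 1)
    (hcd : d ≤ c + 2 * Real.pi) :
    IntegrableOn (fun p ↦ h p - p.1 • v) (Ioc a b ×ˢ Ioc c d) :=
  ((H.integrableOn c).mono_set (prod_mono (Ioc_subset_Ioo ha hb) (Ioc_subset_Ioc_right hcd))).sub
    (integrableOn_fst_smul_const a b c d v)

lemma integrableOn_sub_polarBox (H : PolarBWMO h A C) (hx : 0 < x) (hx' : x ≤ 1 / 2) (v : E)
    (hp : p ∈ polarBox x θ) (hq : q ∈ polarBox x θ) :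
    IntegrableOn (fun r ↦ h r - r.1 • v) (Ioc p.1 q.1 ×ˢ Ioc p.2 q.2) := by
  obtain ⟨⟨hp₁, -⟩, hp₂, -⟩ := hp
  obtain ⟨⟨-, hq₁⟩, -, hq₂⟩ := hq
  exact H.integrableOn_sub v (by linarith) (by linarith) (by nlinarith [Real.pi_pos])

lemma norm_setIntegral_Ioc_prod_Ioc_le (H : PolarBWMO h A C) (hx : 0 < x) (hx' : x ≤ 1 / 2)
    (hp : p ∈ polarBox x θ) (hq : q ∈ polarBox x θ) (hpq : p ≤ q) :
    ‖∫ r in Ioc p.1 q.1 ×ˢ Ioc p.2 q.2, (h r - r.1 • A x θ)‖ ≤ 4 * C * x ^ 2 := by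
  have hcorner : ((1 - x, θ) : ℝ × ℝ) ∈ polarBox x θ :=
    ⟨left_mem_Icc.2 (by linarith), left_mem_Icc.2 (by nlinarith [Real.pi_pos])⟩
  have hbound (u : ℝ × ℝ) (hu : u ∈ polarBox x θ) := H.norm_setIntegral_le hx hx' hu
  rw [setIntegral_Ioc_prod_Ioc_eq_sub hp.1.1 hpq.1 hp.2.1 hpq.2
    (H.integrableOn_sub_polarBox (p := (1 - x, θ)) (q := q) hx hx' (A x θ) hcorner hq)]
  refine (norm_sub_le_of_le (norm_sub_le_of_le (hbound q hq) (hbound (p.1, q.2) ⟨hp.1, hq.2⟩))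
    (norm_sub_le_of_le (hbound (q.1, p.2) ⟨hq.1, hp.2⟩) (hbound p hp))).trans_eq ?_
  ring

variable [CompleteSpace E]

lemma norm_sub_mul_le (H : PolarBWMO h A C) (hx : 0 < x) (hx' : x ≤ 1 / 2) (hy : 0 < y)
    (hy' : y ≤ 1 / 2) (hp : p ∈ polarBox x θ) (hq : q ∈ polarBox x θ) (hp' : p ∈ polarBox y φ)
    (hq' : q ∈ polarBox y φ) (hpq : p ≤ q) :
    ‖A x θ - A y φ‖ * ((q.1 ^ 2 - p.1 ^ 2) / 2 * (q.2 - p.2)) ≤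
      4 * C * x ^ 2 + 4 * C * y ^ 2 := by
  have hweight : 0 ≤ (q.1 ^ 2 - p.1 ^ 2) / 2 * (q.2 - p.2) :=
    mul_nonneg (by nlinarith [hpq.1, hp.1.1]) (sub_nonneg.2 hpq.2)
  have hdiff : (∫ r in Ioc p.1 q.1 ×ˢ Ioc p.2 q.2, (h r - r.1 • A y φ)) -
      (∫ r in Ioc p.1 q.1 ×ˢ Ioc p.2 q.2, (h r - r.1 • A x θ)) =
      ((q.1 ^ 2 - p.1 ^ 2) / 2 * (q.2 - p.2)) • (A x θ - A y φ) := by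
    rw [← integral_sub (H.integrableOn_sub_polarBox hx hx' _ hp hq)
      (H.integrableOn_sub_polarBox hx hx' _ hp hq), ← setIntegral_fst_Ioc_prod_Ioc hpq.1 hpq.2,
      ← integral_smul_const]
    simp only [smul_sub, sub_sub_sub_cancel_left]
  rw [← Real.norm_of_nonneg hweight, mul_comm, ← norm_smul, ← hdiff, add_comm]
  exact norm_sub_le_of_le (H.norm_setIntegral_Ioc_prod_Ioc_le hy hy' hp' hq' hpq)
    (H.norm_setIntegral_Ioc_prod_Ioc_le hx hx' hp hq hpq)

lemma norm_sub_le_of_weight (H : PolarBWMO h A C) (hx : 0 < x) (hx' : x ≤ 1 / 2) (hy : 0 < y)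
    (hyx : y ≤ x) (hp : p ∈ polarBox x θ) (hq : q ∈ polarBox x θ) (hp' : p ∈ polarBox y φ)
    (hq' : q ∈ polarBox y φ) (hfst : p.1 + x / 4 ≤ q.1) (hsnd : p.2 + 2 * x ≤ q.2) :
    ‖A x θ - A y φ‖ ≤ 32 * C := by
  have hmul := H.norm_sub_mul_le hx hx' hy (hyx.trans hx') hp hq hp' hq'
    ⟨by linarith, by linarith⟩
  have hweight : x ^ 2 / 4 ≤ (q.1 ^ 2 - p.1 ^ 2) / 2 * (q.2 - p.2) := by
    have h₁ : x / 8 ≤ (q.1 ^ 2 - p.1 ^ 2) / 2 := by nlinarith [hp.1.1]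
    calc x ^ 2 / 4 = x / 8 * (2 * x) := by ring
      _ ≤ _ := by gcongr <;> linarith
  have hyx' : C * y ^ 2 ≤ C * x ^ 2 :=
    mul_le_mul_of_nonneg_left (by gcongr) H.nonneg
  have hbound : ‖A x θ - A y φ‖ * (x ^ 2 / 4) ≤ 32 * C * (x ^ 2 / 4) := by
    have := mul_le_mul_of_nonneg_left hweight (norm_nonneg (A x θ - A y φ))
    linarith
  exact le_of_mul_le_mul_right hbound (by positivity)

lemma norm_sub_le_of_radial_step (H : PolarBWMO h A C) (hx : 0 < x) (hx' : x ≤ 1 / 2)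
    (hxy : 3 / 4 * x ≤ y) (hyx : y ≤ x) : ‖A x θ - A y θ‖ ≤ 32 * C := by
  have hpi := Real.pi_gt_three
  refine H.norm_sub_le_of_weight (p := (1 - y, θ)) (q := (1 - x / 2, θ + Real.pi * y)) hx hx'
    (by linarith) hyx ?_ ?_ ?_ ?_ (by linarith) (by nlinarith) <;>
  refine ⟨⟨?_, ?_⟩, ?_, ?_⟩ <;> nlinarith

lemma norm_sub_le_of_angular_step (H : PolarBWMO h A C) (hx : 0 < x) (hx' : x ≤ 1 / 2)
    (hθφ : |θ - φ| ≤ x) : ‖A x θ - A x φ‖ ≤ 32 * C := by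
  wlog hle : θ ≤ φ generalizing θ φ
  · rw [norm_sub_rev]
    exact this (by rwa [abs_sub_comm]) (by linarith)
  have hpi := Real.pi_gt_three
  have hφθ := (abs_le.1 hθφ).1
  refine H.norm_sub_le_of_weight (p := (1 - x, φ)) (q := (1 - x / 2, θ + Real.pi * x)) hx hx' hx
    le_rfl ?_ ?_ ?_ ?_ (by linarith) (by nlinarith) <;>
  refine ⟨⟨?_, ?_⟩, ?_, ?_⟩ <;> nlinarith

/-- Telescoping over radii `(3/4)ᵏ x`. The number of steps is logarithmic in `x / y`; the weaker
square root is what the induction reproduces without logarithms, since `√(3/4) ≤ 7/8`. -/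
lemma norm_sub_le_sqrt (H : PolarBWMO h A C) (hy : 0 < y) (hyx : y ≤ x) (hx' : x ≤ 1 / 2) :
    ‖A x θ - A y θ‖ ≤ 256 * C * √(x / y) := by
  have hC := H.nonneg
  obtain ⟨n, hn⟩ := exists_pow_lt_of_lt_one (div_pos hy (hy.trans_le hyx))
    (show (3 / 4 : ℝ) < 1 by norm_num)
  replace hn : (3 / 4) ^ n * x ≤ y := ((lt_div_iff₀ (hy.trans_le hyx)).1 hn).le
  induction n generalizing x with
  | zero =>
    obtain rfl : x = y := le_antisymm (by simpa using hn) hyx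
    simpa using by positivity
  | succ n ih =>
    have hone : 1 ≤ √(x / y) := Real.one_le_sqrt.2 ((one_le_div hy).2 hyx)
    rcases le_total (3 / 4 * x) y with hxy | hxy
    · nlinarith [H.norm_sub_le_of_radial_step (θ := θ) (hy.trans_le hyx) hx' hxy hyx]
    · have hstep := H.norm_sub_le_of_radial_step (θ := θ) (y := 3 / 4 * x) (hy.trans_le hyx) hx'
        le_rfl (by linarith)
      have hrest := ih hxy (by linarith) (by rw [pow_succ] at hn; linarith)
      have hxy_nonneg : 0 ≤ x / y := div_nonneg (hy.le.trans hyx) hy.le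
      have hsqrt : √(3 / 4 * x / y) ≤ 7 / 8 * √(x / y) := by
        refine Real.sqrt_le_iff.2 ⟨by positivity, ?_⟩
        rw [mul_pow, Real.sq_sqrt hxy_nonneg, mul_div_assoc]
        linarith
      calc ‖A x θ - A y θ‖
          ≤ 32 * C + 256 * C * (7 / 8 * √(x / y)) :=
            (norm_sub_le_norm_sub_add_norm_sub _ _ _).trans
              (add_le_add hstep (hrest.trans (by gcongr)))
        _ ≤ 256 * C * √(x / y) := by nlinarith

lemma norm_sub_le (H : PolarBWMO h A C) (hx : 0 < x) (hx' : x ≤ 1 / 2) (hy : 0 < y)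
    (hy' : y ≤ 1 / 2) (hxL : x ≤ L) (hyL : y ≤ L) (hL : |θ - φ| ≤ L) :
    ‖A x θ - A y φ‖ ≤ 288 * C * (√(L / x) + √(L / y)) := by
  have hC := H.nonneg
  set X := min (1 / 2) L with hX
  have hXL : X ≤ L := min_le_right _ _
  have hxX : x ≤ X := le_min hx' hxL
  have hradial_x : ‖A X θ - A x θ‖ ≤ 256 * C * √(L / x) :=
    (H.norm_sub_le_sqrt hx hxX (min_le_left _ _)).trans (by gcongr)
  have hradial_y : ‖A X φ - A y φ‖ ≤ 256 * C * √(L / y) :=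
    (H.norm_sub_le_sqrt hy (le_min hy' hyL) (min_le_left _ _)).trans (by gcongr)
  have hangular : ‖A X θ - A X φ‖ ≤ 32 * C := by
    rcases le_total L (1 / 2) with hL' | hL'
    · rw [hX, min_eq_right hL']
      exact H.norm_sub_le_of_angular_step (by linarith) hL' hL
    · rw [hX, min_eq_left hL']
      linarith [_root_.norm_sub_le_of_le (H.norm_half_le θ) (H.norm_half_le φ)]
  have hone : 1 ≤ √(L / x) := Real.one_le_sqrt.2 ((one_le_div hx).2 hxL)
  have hnonneg : 0 ≤ √(L / y) := Real.sqrt_nonneg _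
  calc ‖A x θ - A y φ‖ ≤ ‖A x θ - A X θ‖ + (‖A X θ - A X φ‖ + ‖A X φ - A y φ‖) :=
        (norm_sub_le_norm_sub_add_norm_sub _ _ _).trans
          (add_le_add_right (norm_sub_le_norm_sub_add_norm_sub _ _ _) _)
    _ ≤ 256 * C * √(L / x) + (32 * C + 256 * C * √(L / y)) := by
        rw [norm_sub_rev (A x θ)]
        gcongr
    _ ≤ 288 * C * (√(L / x) + √(L / y)) := by nlinarith

end PolarBWMO

end PolarOscillation

section LayerIntegrals

variable {E U X : Type*} [NormedAddCommGroup E] [NormedSpace ℝ E]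
  [MeasurableSpace U] [MeasurableSpace X] {μ : Measure U} {ν : Measure X}
  {S : Set (U × X)} {κ : U → ℝ} {G : X → E}

lemma integral_indicator_smul_right (hS : MeasurableSet S) (u : U) :
    ∫ x, S.indicator (fun z ↦ κ z.1 • G z.2) (u, x) ∂ν =
      κ u • ∫ x in {x | (u, x) ∈ S}, G x ∂ν := by
  rw [← integral_smul]
  exact integral_indicator (measurable_prodMk_left hS)

variable [CompleteSpace E]

lemma integral_indicator_smul_left (hS : MeasurableSet S) (x : X) :
    ∫ u, S.indicator (fun z ↦ κ z.1 • G z.2) (u, x) ∂μ =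
      (∫ u in {u | (u, x) ∈ S}, κ u ∂μ) • G x := by
  rw [← integral_smul_const]
  exact integral_indicator (measurable_prodMk_right hS)

variable [SFinite μ] [SFinite ν]

lemma integrable_setIntegral_smul (hS : MeasurableSet S) (hκ : Integrable κ μ)
    (hG : Integrable G ν) :
    Integrable (fun x ↦ (∫ u in {u | (u, x) ∈ S}, κ u ∂μ) • G x) ν := by
  simp only [← integral_indicator_smul_left hS]
  exact ((hκ.smul_prod hG).indicator hS).integral_prod_right

lemma norm_integral_setIntegral_smul_le {B : ℝ} (hS : MeasurableSet S) (hκ : Integrable κ μ)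
    (hG : Integrable G ν) (hB : ∀ᵐ u ∂μ, ‖∫ x in {x | (u, x) ∈ S}, G x ∂ν‖ ≤ B) :
    ‖∫ x, (∫ u in {u | (u, x) ∈ S}, κ u ∂μ) • G x ∂ν‖ ≤ (∫ u, ‖κ u‖ ∂μ) * B := by
  simp only [← integral_indicator_smul_left hS]
  rw [← integral_integral_swap (f := fun u x ↦ S.indicator (fun z ↦ κ z.1 • G z.2) (u, x))
    ((hκ.smul_prod hG).indicator hS), ← integral_mul_const]
  refine norm_integral_le_of_norm_le (hκ.norm.mul_const B) (hB.mono fun u hu ↦ ?_)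
  rw [integral_indicator_smul_right hS, norm_smul]
  gcongr

end LayerIntegrals

section PartialIntegration

variable {K K₁ K₂ K₁₂ : ℝ × ℝ → ℝ} {p q : ℝ × ℝ} {s : Set (ℝ × ℝ)}

lemma setIntegral_Icc_eq_sub_of_hasDerivAt {f f' : ℝ → ℝ} {a b : ℝ} (hab : a ≤ b)
    (hf : ∀ x ∈ Icc a b, HasDerivAt f (f' x) x) (hf' : ContinuousOn f' (Icc a b)) :
    ∫ x in Icc a b, f' x = f b - f a := by
  rw [← uIcc_of_le hab] at hf hf'
  rw [integral_Icc_eq_integral_Ioc, ← intervalIntegral.integral_of_le hab,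
    intervalIntegral.integral_eq_sub_of_hasDerivAt hf hf'.intervalIntegrable]

section Layers

variable {E U : Type*} [NormedAddCommGroup E] [NormedSpace ℝ E] [CompleteSpace E]
  [MeasurableSpace U] {μ : Measure U} [SFinite μ] {κ : U → ℝ} {γ : U → ℝ × ℝ} {G : ℝ × ℝ → E}
  {B : ℝ}

lemma integrableOn_layer_smul (hγ : Measurable γ) (hκ : Integrable κ μ) (hG : IntegrableOn G s) :
    IntegrableOn (fun x ↦ (∫ u in {u | x ≤ γ u}, κ u ∂μ) • G x) s :=
  integrable_setIntegral_smul (S := {z : U × ℝ × ℝ | z.2 ≤ γ z.1})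
    (measurableSet_le measurable_snd (hγ.comp measurable_fst)) hκ hG

lemma norm_setIntegral_layer_smul_le (hγ : Measurable γ) (hκ : Integrable κ μ)
    (hG : IntegrableOn G (Ioc p.1 q.1 ×ˢ Ioc p.2 q.2)) (hmem : ∀ᵐ u ∂μ, γ u ∈ Icc p q)
    (hB : ∀ r ∈ Icc p q, ‖∫ x in Ioc p.1 r.1 ×ˢ Ioc p.2 r.2, G x‖ ≤ B) :
    ‖∫ x in Ioc p.1 q.1 ×ˢ Ioc p.2 q.2, (∫ u in {u | x ≤ γ u}, κ u ∂μ) • G x‖ ≤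
      (∫ u, ‖κ u‖ ∂μ) * B := by
  refine norm_integral_setIntegral_smul_le (S := {z : U × ℝ × ℝ | z.2 ≤ γ z.1})
    (measurableSet_le measurable_snd (hγ.comp measurable_fst)) hκ hG (hmem.mono fun u hu ↦ ?_)
  have hlayer : Iic (γ u) ∩ Ioc p.1 q.1 ×ˢ Ioc p.2 q.2 =
      Ioc p.1 (γ u).1 ×ˢ Ioc p.2 (γ u).2 := by
    rw [Iic_prod_eq, prod_inter_prod]
    simp only [Iic_inter_Ioc_of_le hu.2.1, Iic_inter_Ioc_of_le hu.2.2]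
  rw [show {x | (u, x) ∈ {z : U × ℝ × ℝ | z.2 ≤ γ z.1}} = Iic (γ u) from rfl,
    Measure.restrict_restrict measurableSet_Iic, hlayer]
  exact hB _ hu

end Layers

/-- `K` has the continuous partial derivatives `K₁`, `K₂` and mixed derivative `K₁₂` on `s`. -/
structure HasMixedDerivOn (K K₁ K₂ K₁₂ : ℝ × ℝ → ℝ) (s : Set (ℝ × ℝ)) : Prop where
  hasDerivAt_fst {p : ℝ × ℝ} (hp : p ∈ s) : HasDerivAt (fun u ↦ K (u, p.2)) (K₁ p) p.1
  hasDerivAt_snd {p : ℝ × ℝ} (hp : p ∈ s) : HasDerivAt (fun v ↦ K (p.1, v)) (K₂ p) p.2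
  hasDerivAt_fst_snd {p : ℝ × ℝ} (hp : p ∈ s) : HasDerivAt (fun v ↦ K₁ (p.1, v)) (K₁₂ p) p.2
  continuousOn_fst : ContinuousOn K₁ s
  continuousOn_snd : ContinuousOn K₂ s
  continuousOn_fst_snd : ContinuousOn K₁₂ s

namespace HasMixedDerivOn

lemma mono {t : Set (ℝ × ℝ)} (H : HasMixedDerivOn K K₁ K₂ K₁₂ t) (h : s ⊆ t) :
    HasMixedDerivOn K K₁ K₂ K₁₂ s where
  hasDerivAt_fst hp := H.hasDerivAt_fst (h hp)
  hasDerivAt_snd hp := H.hasDerivAt_snd (h hp)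
  hasDerivAt_fst_snd hp := H.hasDerivAt_fst_snd (h hp)
  continuousOn_fst := H.continuousOn_fst.mono h
  continuousOn_snd := H.continuousOn_snd.mono h
  continuousOn_fst_snd := H.continuousOn_fst_snd.mono h

lemma continuousOn_fst_slice (H : HasMixedDerivOn K K₁ K₂ K₁₂ (Icc p q)) {t : ℝ}
    (ht : t ∈ Icc p.2 q.2) : ContinuousOn (fun u ↦ K₁ (u, t)) (Icc p.1 q.1) :=
  H.continuousOn_fst.comp (by fun_prop) fun _ hu ↦ ⟨⟨hu.1, ht.1⟩, hu.2, ht.2⟩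

lemma continuousOn_snd_slice (H : HasMixedDerivOn K K₁ K₂ K₁₂ (Icc p q)) {s : ℝ}
    (hs : s ∈ Icc p.1 q.1) : ContinuousOn (fun v ↦ K₂ (s, v)) (Icc p.2 q.2) :=
  H.continuousOn_snd.comp (by fun_prop) fun _ hv ↦ ⟨⟨hs.1, hv.1⟩, hs.2, hv.2⟩

lemma setIntegral_fst (H : HasMixedDerivOn K K₁ K₂ K₁₂ (Icc p q)) (hpq : p.1 ≤ q.1) {t : ℝ}
    (ht : t ∈ Icc p.2 q.2) : ∫ u in Icc p.1 q.1, K₁ (u, t) = K (q.1, t) - K (p.1, t) :=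
  setIntegral_Icc_eq_sub_of_hasDerivAt hpq (f := fun u ↦ K (u, t))
    (fun u hu ↦ H.hasDerivAt_fst (p := (u, t)) ⟨⟨hu.1, ht.1⟩, hu.2, ht.2⟩)
    (H.continuousOn_fst_slice ht)

lemma setIntegral_snd (H : HasMixedDerivOn K K₁ K₂ K₁₂ (Icc p q)) (hpq : p.2 ≤ q.2) {s : ℝ}
    (hs : s ∈ Icc p.1 q.1) : ∫ v in Icc p.2 q.2, K₂ (s, v) = K (s, q.2) - K (s, p.2) :=
  setIntegral_Icc_eq_sub_of_hasDerivAt hpq (f := fun v ↦ K (s, v))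
    (fun v hv ↦ H.hasDerivAt_snd (p := (s, v)) ⟨⟨hs.1, hv.1⟩, hs.2, hv.2⟩)
    (H.continuousOn_snd_slice hs)

lemma setIntegral_fst_snd (H : HasMixedDerivOn K K₁ K₂ K₁₂ (Icc p q)) (hpq : p ≤ q) :
    ∫ r in Icc p q, K₁₂ r = K q - K (p.1, q.2) - (K (q.1, p.2) - K p) := by
  have hinner (u : ℝ) (hu : u ∈ Icc p.1 q.1) :
      ∫ v in Icc p.2 q.2, K₁₂ (u, v) = K₁ (u, q.2) - K₁ (u, p.2) :=
    setIntegral_Icc_eq_sub_of_hasDerivAt hpq.2 (f := fun v ↦ K₁ (u, v))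
      (fun v hv ↦ H.hasDerivAt_fst_snd (p := (u, v)) ⟨⟨hu.1, hv.1⟩, hu.2, hv.2⟩)
      (H.continuousOn_fst_snd.comp (by fun_prop) fun _ hv ↦ ⟨⟨hu.1, hv.1⟩, hu.2, hv.2⟩)
  have hslice (t : ℝ) (ht : t ∈ Icc p.2 q.2) :
      IntegrableOn (fun u ↦ K₁ (u, t)) (Icc p.1 q.1) :=
    (H.continuousOn_fst_slice ht).integrableOn_compact isCompact_Icc
  have hK₁₂ := H.continuousOn_fst_snd.integrableOn_compact (μ := volume) isCompact_Icc
  rw [Icc_prod_eq] at hK₁₂ ⊢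
  rw [Measure.volume_eq_prod] at hK₁₂ ⊢
  rw [setIntegral_prod _ hK₁₂, setIntegral_congr_fun measurableSet_Icc hinner,
    integral_sub (hslice _ (right_mem_Icc.2 hpq.2)) (hslice _ (left_mem_Icc.2 hpq.2)),
    H.setIntegral_fst hpq.1 (right_mem_Icc.2 hpq.2), H.setIntegral_fst hpq.1 (left_mem_Icc.2 hpq.2)]

lemma eq_sub_setIntegral (H : HasMixedDerivOn K K₁ K₂ K₁₂ (Icc p q)) (hpq : p ≤ q) :
    K p = K q - (∫ u in Icc p.1 q.1, K₁ (u, q.2)) - (∫ v in Icc p.2 q.2, K₂ (q.1, v)) +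
      ∫ r in Icc p q, K₁₂ r := by
  rw [H.setIntegral_fst hpq.1 (right_mem_Icc.2 hpq.2),
    H.setIntegral_snd hpq.2 (right_mem_Icc.2 hpq.1), H.setIntegral_fst_snd hpq]
  ring

lemma eq_sub_setIntegral_layer (H : HasMixedDerivOn K K₁ K₂ K₁₂ (Icc p q)) {x : ℝ × ℝ}
    (hx : x ∈ Icc p q) :
    K x = K q - (∫ u in {u | x ≤ (u, q.2)}, K₁ (u, q.2) ∂volume.restrict (Icc p.1 q.1)) -
      (∫ v in {v | x ≤ (q.1, v)}, K₂ (q.1, v) ∂volume.restrict (Icc p.2 q.2)) +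
      ∫ r in {r | x ≤ r}, K₁₂ r ∂volume.restrict (Icc p q) := by
  have hfst : {u | x ≤ (u, q.2)} ∩ Icc p.1 q.1 = Icc x.1 q.1 := by
    ext u
    exact ⟨fun h ↦ ⟨h.1.1, h.2.2⟩, fun h ↦ ⟨⟨h.1, hx.2.2⟩, hx.1.1.trans h.1, h.2⟩⟩
  have hsnd : {v | x ≤ (q.1, v)} ∩ Icc p.2 q.2 = Icc x.2 q.2 := by
    ext v
    exact ⟨fun h ↦ ⟨h.1.2, h.2.2⟩, fun h ↦ ⟨⟨hx.2.1, h.1⟩, hx.1.2.trans h.1, h.2⟩⟩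
  have hboth : {r | x ≤ r} ∩ Icc p q = Icc x q := by
    ext r
    exact ⟨fun h ↦ ⟨h.1, h.2.2⟩, fun h ↦ ⟨h.1, hx.1.trans h.1, h.2⟩⟩
  rw [Measure.restrict_restrict (measurableSet_le measurable_const (by fun_prop)),
    Measure.restrict_restrict (measurableSet_le measurable_const (by fun_prop)),
    Measure.restrict_restrict (measurableSet_le measurable_const (by fun_prop)), hfst, hsnd, hboth]
  exact (H.mono (Icc_subset_Icc_left hx.1)).eq_sub_setIntegral hx.2

variable {E : Type*} [NormedAddCommGroup E] [NormedSpace ℝ E] [CompleteSpace E] {G : ℝ × ℝ → E}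
  {B : ℝ}

/-- Integration by parts in both variables, bounding the boundary terms and the remainder by the
primitive of `G` times the variation of `K` in the sense of Hardy and Krause. -/
lemma norm_setIntegral_smul_le (H : HasMixedDerivOn K K₁ K₂ K₁₂ (Icc p q)) (hpq : p ≤ q)
    (hG : IntegrableOn G (Ioc p.1 q.1 ×ˢ Ioc p.2 q.2))
    (hB : ∀ r ∈ Icc p q, ‖∫ x in Ioc p.1 r.1 ×ˢ Ioc p.2 r.2, G x‖ ≤ B) :
    ‖∫ x in Ioc p.1 q.1 ×ˢ Ioc p.2 q.2, K x • G x‖ ≤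
      (‖K q‖ + (∫ u in Icc p.1 q.1, ‖K₁ (u, q.2)‖) + (∫ v in Icc p.2 q.2, ‖K₂ (q.1, v)‖) +
        ∫ r in Icc p q, ‖K₁₂ r‖) * B := by
  have hK₁ : IntegrableOn (fun u ↦ K₁ (u, q.2)) (Icc p.1 q.1) :=
    (H.continuousOn_fst_slice (right_mem_Icc.2 hpq.2)).integrableOn_compact isCompact_Icc
  have hK₂ : IntegrableOn (fun v ↦ K₂ (q.1, v)) (Icc p.2 q.2) :=
    (H.continuousOn_snd_slice (right_mem_Icc.2 hpq.1)).integrableOn_compact isCompact_Icc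
  have hK₁₂ := H.continuousOn_fst_snd.integrableOn_compact (μ := volume) isCompact_Icc
  have hsplit : EqOn (fun x ↦ K x • G x) ((fun x ↦ K q • G x) -
      (fun x ↦ (∫ u in {u | x ≤ (u, q.2)}, K₁ (u, q.2) ∂volume.restrict (Icc p.1 q.1)) • G x) -
      (fun x ↦ (∫ v in {v | x ≤ (q.1, v)}, K₂ (q.1, v) ∂volume.restrict (Icc p.2 q.2)) • G x) +
      fun x ↦ (∫ r in {r | x ≤ id r}, K₁₂ r ∂volume.restrict (Icc p q)) • G x)
      (Ioc p.1 q.1 ×ˢ Ioc p.2 q.2) := fun x hx ↦ by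
    simp only [Pi.add_apply, Pi.sub_apply, ← sub_smul, ← add_smul, id]
    rw [← H.eq_sub_setIntegral_layer ⟨⟨hx.1.1.le, hx.2.1.le⟩, hx.1.2, hx.2.2⟩]
  have hint₀ : IntegrableOn (fun x ↦ K q • G x) (Ioc p.1 q.1 ×ˢ Ioc p.2 q.2) := hG.smul _
  have hint₁ := integrableOn_layer_smul (γ := fun u ↦ (u, q.2)) (by fun_prop) hK₁ hG
  have hint₂ := integrableOn_layer_smul (γ := fun v ↦ (q.1, v)) (by fun_prop) hK₂ hG
  have hint₁₂ := integrableOn_layer_smul (γ := id) measurable_id hK₁₂ hG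
  rw [setIntegral_congr_fun (measurableSet_Ioc.prod measurableSet_Ioc) hsplit,
    integral_add' ((hint₀.sub hint₁).sub hint₂) hint₁₂, integral_sub' (hint₀.sub hint₁) hint₂,
    integral_sub' hint₀ hint₁, integral_smul, add_mul, add_mul, add_mul]
  refine norm_add_le_of_le (norm_sub_le_of_le (norm_sub_le_of_le ?_ ?_) ?_) ?_
  · rw [norm_smul]
    exact mul_le_mul_of_nonneg_left (hB q (right_mem_Icc.2 hpq)) (norm_nonneg _)
  · exact norm_setIntegral_layer_smul_le (by fun_prop) hK₁ hG
      (ae_restrict_of_forall_mem measurableSet_Icc fun u hu ↦ ⟨⟨hu.1, hpq.2⟩, hu.2, le_rfl⟩) hB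
  · exact norm_setIntegral_layer_smul_le (by fun_prop) hK₂ hG
      (ae_restrict_of_forall_mem measurableSet_Icc fun v hv ↦ ⟨⟨hpq.1, hv.1⟩, le_rfl, hv.2⟩) hB
  · exact norm_setIntegral_layer_smul_le measurable_id hK₁₂ hG
      (ae_restrict_mem measurableSet_Icc) hB

end HasMixedDerivOn

end PartialIntegration

section InverseSquare

variable {N N₁ N₂ N₁₂ : ℝ × ℝ → ℝ} {s : Set (ℝ × ℝ)}

lemma HasMixedDerivOn.inv_sq (H : HasMixedDerivOn N N₁ N₂ N₁₂ s) (hN : ContinuousOn N s)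
    (h0 : ∀ p ∈ s, N p ≠ 0) :
    HasMixedDerivOn (fun p ↦ (N p ^ 2)⁻¹) (fun p ↦ -2 * (N p ^ 3)⁻¹ * N₁ p)
      (fun p ↦ -2 * (N p ^ 3)⁻¹ * N₂ p)
      (fun p ↦ 6 * (N p ^ 4)⁻¹ * (N₁ p * N₂ p) - 2 * (N p ^ 3)⁻¹ * N₁₂ p) s := by
  have hinv (k : ℕ) : ContinuousOn (fun p ↦ (N p ^ k)⁻¹) s :=
    (hN.pow k).inv₀ fun p hp ↦ pow_ne_zero k (h0 p hp)
  refine ⟨fun {p} hp ↦ ?_, fun {p} hp ↦ ?_, fun {p} hp ↦ ?_,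
    (continuousOn_const.mul (hinv 3)).mul H.continuousOn_fst,
    (continuousOn_const.mul (hinv 3)).mul H.continuousOn_snd,
    ((continuousOn_const.mul (hinv 4)).mul (H.continuousOn_fst.mul H.continuousOn_snd)).sub
      ((continuousOn_const.mul (hinv 3)).mul H.continuousOn_fst_snd)⟩
  · refine (((H.hasDerivAt_fst hp).pow 2).inv (pow_ne_zero 2 (h0 p hp))).congr_deriv ?_
    have := h0 p hp
    simp only [Pi.pow_apply, Prod.mk.eta]
    field_simp
    norm_num
    ring
  · refine (((H.hasDerivAt_snd hp).pow 2).inv (pow_ne_zero 2 (h0 p hp))).congr_deriv ?_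
    have := h0 p hp
    simp only [Pi.pow_apply, Prod.mk.eta]
    field_simp
    norm_num
    ring
  · refine (((((H.hasDerivAt_snd hp).pow 3).inv (pow_ne_zero 3 (h0 p hp))).const_mul (-2)).mul
      (H.hasDerivAt_fst_snd hp)).congr_deriv ?_
    have := h0 p hp
    simp only [Pi.pow_apply, Pi.inv_apply, Prod.mk.eta]
    field_simp
    norm_num
    ring

variable {n m m₁ m₂ l : ℝ}

lemma abs_neg_two_mul_inv_cube_mul_le (hl : 0 < l) (hln : l ^ 2 ≤ n) (hm : |m| ≤ 2 * √n) :
    |-2 * (n ^ 3)⁻¹ * m| ≤ 4 * (l ^ 5)⁻¹ := by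
  have hln' : l ≤ √n := Real.le_sqrt_of_sq_le hln
  have hn : 0 < √n := hl.trans_le hln'
  obtain ⟨r, hr, rfl⟩ : ∃ r, 0 < r ∧ n = r ^ 2 :=
    ⟨√n, hn, (Real.sq_sqrt (Real.sqrt_pos.1 hn).le).symm⟩
  rw [Real.sqrt_sq hr.le] at hm hln'
  calc |-2 * ((r ^ 2) ^ 3)⁻¹ * m| = 2 * ((r ^ 2) ^ 3)⁻¹ * |m| := by
        rw [abs_mul, abs_mul, abs_neg, abs_two, abs_of_pos (by positivity)]
    _ ≤ 2 * ((r ^ 2) ^ 3)⁻¹ * (2 * r) := by gcongr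
    _ = 4 * (r ^ 5)⁻¹ := by field_simp; norm_num
    _ ≤ 4 * (l ^ 5)⁻¹ := by gcongr

lemma abs_six_mul_inv_pow_mul_sub_le (hl : 0 < l) (hln : l ^ 2 ≤ n) (hm₁ : |m₁| ≤ 2 * √n)
    (hm₂ : |m₂| ≤ 2 * √n) (hm : |m| ≤ 2) :
    |6 * (n ^ 4)⁻¹ * (m₁ * m₂) - 2 * (n ^ 3)⁻¹ * m| ≤ 28 * (l ^ 6)⁻¹ := by
  have hn : 0 < n := (pow_pos hl 2).trans_le hln
  calc |6 * (n ^ 4)⁻¹ * (m₁ * m₂) - 2 * (n ^ 3)⁻¹ * m|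
      ≤ |6 * (n ^ 4)⁻¹ * (m₁ * m₂)| + |2 * (n ^ 3)⁻¹ * m| := abs_sub _ _
    _ = 6 * (n ^ 4)⁻¹ * (|m₁| * |m₂|) + 2 * (n ^ 3)⁻¹ * |m| := by
        rw [abs_mul, abs_mul m₁, abs_mul _ m, abs_of_pos (a := 6 * (n ^ 4)⁻¹) (by positivity),
          abs_of_pos (a := 2 * (n ^ 3)⁻¹) (by positivity)]
    _ ≤ 6 * (n ^ 4)⁻¹ * ((2 * √n) * (2 * √n)) + 2 * (n ^ 3)⁻¹ * 2 := by gcongr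
    _ = 28 * ((n ^ 3)⁻¹) := by
        rw [show (2 * √n) * (2 * √n) = 4 * √n ^ 2 by ring, Real.sq_sqrt hn.le]
        field_simp
        norm_num
    _ ≤ 28 * ((l ^ 2) ^ 3)⁻¹ := by gcongr
    _ = 28 * (l ^ 6)⁻¹ := by ring

end InverseSquare

section DistSq

open Real

variable {s θ : ℝ} {p : ℝ × ℝ}

/-- The squared modulus `|1 - w z̄|²` of the denominator of the reproducing kernel, for
`z = s e^{iθ}` and `w` the point with polar coordinates `p`. -/
noncomputable def distSq (s θ : ℝ) (p : ℝ × ℝ) : ℝ :=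
  1 - 2 * (s * p.1) * cos (p.2 - θ) + (s * p.1) ^ 2

@[fun_prop]
lemma continuous_distSq (s θ : ℝ) : Continuous (distSq s θ) := by
  unfold distSq
  fun_prop

lemma distSq_eq_add_sin_sq (s θ : ℝ) (p : ℝ × ℝ) :
    distSq s θ p = (s * p.1 - cos (p.2 - θ)) ^ 2 + sin (p.2 - θ) ^ 2 := by
  rw [distSq, sin_sq]
  ring

lemma distSq_eq_add_one_sub_cos (s θ : ℝ) (p : ℝ × ℝ) :
    distSq s θ p = (1 - s * p.1) ^ 2 + 2 * (s * p.1) * (1 - cos (p.2 - θ)) := by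
  rw [distSq]
  ring

lemma hasMixedDerivOn_distSq (s θ : ℝ) :
    HasMixedDerivOn (distSq s θ) (fun p ↦ 2 * s * (s * p.1 - cos (p.2 - θ)))
      (fun p ↦ 2 * (s * p.1) * sin (p.2 - θ)) (fun p ↦ 2 * s * sin (p.2 - θ)) univ where
  hasDerivAt_fst {p} _ := by
    have h : HasDerivAt (fun u ↦ s * u) (s * 1) p.1 := (hasDerivAt_id p.1).const_mul s
    refine (((h.const_mul 2).mul_const (cos (p.2 - θ))).const_sub 1 |>.add (h.pow 2)).congr_deriv ?_
    norm_num
    ring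
  hasDerivAt_snd {p} _ := by
    have h : HasDerivAt (fun v ↦ cos (v - θ)) (-sin (p.2 - θ) * 1) p.2 :=
      ((hasDerivAt_id p.2).sub_const θ).cos
    refine (((h.const_mul (2 * (s * p.1))).const_sub 1).add_const ((s * p.1) ^ 2)).congr_deriv ?_
    ring
  hasDerivAt_fst_snd {p} _ := by
    have h : HasDerivAt (fun v ↦ cos (v - θ)) (-sin (p.2 - θ) * 1) p.2 :=
      ((hasDerivAt_id p.2).sub_const θ).cos
    exact ((h.const_sub (s * p.1)).const_mul (2 * s)).congr_deriv (by ring)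
  continuousOn_fst := by fun_prop
  continuousOn_snd := by fun_prop
  continuousOn_fst_snd := by fun_prop

lemma abs_two_mul_le_two_mul_sqrt {a c : ℝ} (h : a ^ 2 ≤ c) : |2 * a| ≤ 2 * √c := by
  rw [abs_mul, abs_two]
  gcongr
  exact abs_le_sqrt h

lemma abs_distSq_deriv_fst_le (hs : |s| ≤ 1) :
    |2 * s * (s * p.1 - cos (p.2 - θ))| ≤ 2 * √(distSq s θ p) := by
  rw [mul_assoc]
  refine abs_two_mul_le_two_mul_sqrt ?_
  rw [mul_pow, distSq_eq_add_sin_sq]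
  have : s ^ 2 ≤ 1 := (sq_le_one_iff_abs_le_one s).2 hs
  exact (mul_le_of_le_one_left (sq_nonneg _) this).trans (le_add_of_nonneg_right (sq_nonneg _))

lemma abs_distSq_deriv_snd_le (hs : |s * p.1| ≤ 1) :
    |2 * (s * p.1) * sin (p.2 - θ)| ≤ 2 * √(distSq s θ p) := by
  rw [mul_assoc]
  refine abs_two_mul_le_two_mul_sqrt ?_
  rw [mul_pow, distSq_eq_add_sin_sq]
  have : (s * p.1) ^ 2 ≤ 1 := (sq_le_one_iff_abs_le_one _).2 hs
  exact (mul_le_of_le_one_left (sq_nonneg _) this).trans (le_add_of_nonneg_left (sq_nonneg _))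

lemma abs_distSq_deriv_fst_snd_le (hs : |s| ≤ 1) (ψ : ℝ) : |2 * s * sin ψ| ≤ 2 := by
  rw [abs_mul, abs_mul, abs_two]
  nlinarith [abs_sin_le_one ψ, abs_nonneg (sin ψ), abs_nonneg s]

lemma sq_div_eight_le_one_sub_cos {ψ : ℝ} (hψ : |ψ| ≤ π) : ψ ^ 2 / 8 ≤ 1 - cos ψ := by
  have hπ : 1 / 8 ≤ 2 / π ^ 2 := by
    rw [div_le_div_iff₀ (by norm_num) (by positivity)]
    nlinarith [pi_pos, pi_lt_four]
  nlinarith [cos_le_one_sub_mul_cos_sq hψ, sq_nonneg ψ]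

lemma sq_le_distSq {x : ℝ} (hx : 0 < x) (hx' : x ≤ 1 / 2) (hp : p.1 ∈ Icc (1 / 2) 1)
    (hψ : |p.2 - θ| ≤ π) :
    ((x + |p.2 - θ| + (1 - p.1)) / 6) ^ 2 ≤ distSq (1 - x) θ p := by
  obtain ⟨hp₁, hp₂⟩ := hp
  have hcos : |p.2 - θ| ^ 2 / 16 ≤ 2 * ((1 - x) * p.1) * (1 - cos (p.2 - θ)) := by
    have : 1 / 4 ≤ (1 - x) * p.1 := by nlinarith
    rw [sq_abs]
    nlinarith [sq_div_eight_le_one_sub_cos hψ, sq_nonneg (p.2 - θ)]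
  rw [distSq_eq_add_one_sub_cos]
  set u := 1 - (1 - x) * p.1
  set v := |p.2 - θ|
  have hv : 0 ≤ v := abs_nonneg _
  have hu : (1 - p.1) + x / 2 ≤ u := by nlinarith
  have hle : (x + v + (1 - p.1)) ^ 2 ≤ (2 * u + v) ^ 2 :=
    pow_le_pow_left₀ (by linarith) (by linarith) 2
  nlinarith [sq_nonneg (u - v), sq_nonneg (4 * u - v / 4), sq_nonneg u, sq_nonneg v]

end DistSq

lemma setIntegral_norm_le_of_norm_le_const {X E : Type*} [MeasurableSpace X] {μ : Measure X}
    [NormedAddCommGroup E] {f : X → E} {s : Set X} {C : ℝ} (hs : μ s < ⊤)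
    (hf : ∀ x ∈ s, ‖f x‖ ≤ C) : ∫ x in s, ‖f x‖ ∂μ ≤ C * μ.real s :=
  (Real.le_norm_self _).trans
    (norm_setIntegral_le_of_norm_le_const hs fun x hx ↦ (norm_norm (f x)).trans_le (hf x hx))

lemma HasMixedDerivOn.norm_setIntegral_smul_le_of_bound {E : Type*} [NormedAddCommGroup E]
    [NormedSpace ℝ E] [CompleteSpace E] {K K₁ K₂ K₁₂ : ℝ × ℝ → ℝ} {p q : ℝ × ℝ} {G : ℝ × ℝ → E}
    {B M₀ M₁ M₂ M₁₂ : ℝ} (H : HasMixedDerivOn K K₁ K₂ K₁₂ (Icc p q)) (hpq : p ≤ q)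
    (hG : IntegrableOn G (Ioc p.1 q.1 ×ˢ Ioc p.2 q.2))
    (hB : ∀ r ∈ Icc p q, ‖∫ x in Ioc p.1 r.1 ×ˢ Ioc p.2 r.2, G x‖ ≤ B)
    (h₀ : |K q| ≤ M₀) (h₁ : ∀ r ∈ Icc p q, |K₁ r| ≤ M₁) (h₂ : ∀ r ∈ Icc p q, |K₂ r| ≤ M₂)
    (h₁₂ : ∀ r ∈ Icc p q, |K₁₂ r| ≤ M₁₂) :
    ‖∫ x in Ioc p.1 q.1 ×ˢ Ioc p.2 q.2, K x • G x‖ ≤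
      (M₀ + M₁ * (q.1 - p.1) + M₂ * (q.2 - p.2) + M₁₂ * ((q.1 - p.1) * (q.2 - p.2))) * B := by
  have hB0 : 0 ≤ B := (norm_nonneg _).trans (hB q (right_mem_Icc.2 hpq))
  have hvol : volume.real (Icc p q) = (q.1 - p.1) * (q.2 - p.2) := by
    rw [Icc_prod_eq, Measure.volume_eq_prod, measureReal_prod_prod,
      Real.volume_real_Icc_of_le hpq.1, Real.volume_real_Icc_of_le hpq.2]
  have hint₁ : ∫ u in Icc p.1 q.1, ‖K₁ (u, q.2)‖ ≤ M₁ * (q.1 - p.1) := by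
    rw [← Real.volume_real_Icc_of_le hpq.1]
    exact setIntegral_norm_le_of_norm_le_const measure_Icc_lt_top
      fun u hu ↦ h₁ (u, q.2) ⟨⟨hu.1, hpq.2⟩, hu.2, le_rfl⟩
  have hint₂ : ∫ v in Icc p.2 q.2, ‖K₂ (q.1, v)‖ ≤ M₂ * (q.2 - p.2) := by
    rw [← Real.volume_real_Icc_of_le hpq.2]
    exact setIntegral_norm_le_of_norm_le_const measure_Icc_lt_top
      fun v hv ↦ h₂ (q.1, v) ⟨⟨hpq.1, hv.1⟩, le_rfl, hv.2⟩
  have hint₁₂ : ∫ r in Icc p q, ‖K₁₂ r‖ ≤ M₁₂ * ((q.1 - p.1) * (q.2 - p.2)) := by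
    rw [← hvol]
    exact setIntegral_norm_le_of_norm_le_const isCompact_Icc.measure_lt_top h₁₂
  refine (H.norm_setIntegral_smul_le hpq hG hB).trans (mul_le_mul_of_nonneg_right ?_ hB0)
  exact add_le_add (add_le_add (add_le_add h₀ hint₁) hint₂) hint₁₂

section Tiles

open Real

/-- The half-open version of `polarBox`; translates of such boxes tile an annulus. -/
def polarTile (y φ : ℝ) : Set (ℝ × ℝ) := Ioc (1 - y) (1 - y / 2) ×ˢ Ioc φ (φ + π * y)

variable {x y θ φ : ℝ} {p : ℝ × ℝ}

lemma measurableSet_polarTile : MeasurableSet (polarTile y φ) :=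
  measurableSet_Ioc.prod measurableSet_Ioc

lemma polarTile_subset_polarBox : polarTile y φ ⊆ polarBox y φ :=
  prod_mono Ioc_subset_Icc_self Ioc_subset_Icc_self

lemma polarBox_eq_Icc (y φ : ℝ) : polarBox y φ = Icc (1 - y, φ) (1 - y / 2, φ + π * y) :=
  Icc_prod_Icc _ _ _ _

lemma volume_polarTile_lt_top : volume (polarTile y φ) < ⊤ :=
  (measure_mono polarTile_subset_polarBox).trans_lt
    (isCompact_Icc.prod isCompact_Icc).measure_lt_top

lemma volume_real_polarTile (hy : 0 ≤ y) :
    volume.real (polarTile y φ) = y / 2 * (π * y) := by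
  rw [polarTile, Measure.volume_eq_prod, measureReal_prod_prod,
    Real.volume_real_Ioc_of_le (by linarith),
    Real.volume_real_Ioc_of_le (le_add_of_nonneg_right (by positivity))]
  ring

lemma sq_le_volume_real_polarTile (hy : 0 ≤ y) : y ^ 2 ≤ volume.real (polarTile y φ) := by
  rw [volume_real_polarTile hy]
  nlinarith [pi_gt_three, sq_nonneg y]

lemma abs_sub_le_of_mem_polarBox (hp : p ∈ polarBox y φ) : |p.2 - φ| ≤ π * y := by
  rw [abs_of_nonneg (sub_nonneg.2 hp.2.1)]
  linarith [hp.2.2]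

lemma abs_sub_add_le_of_mem_polarBox (hx : 0 ≤ x) (hp : p ∈ polarBox y φ) :
    x + |p.2 - θ| ≤ 5 * (x + |φ - θ| + y) := by
  have hy : 0 ≤ y := by linarith [hp.1.1, hp.1.2]
  have hφ := abs_sub_le_of_mem_polarBox hp
  nlinarith [abs_sub_le p.2 φ θ, abs_nonneg (φ - θ), pi_lt_four]

lemma sq_le_distSq_of_mem_polarBox (hx : 0 < x) (hx' : x ≤ 1 / 2) (hy' : y ≤ 1 / 2)
    (hφ : θ - π ≤ φ) (hφ' : φ + π * y ≤ θ + π) (hp : p ∈ polarBox y φ) :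
    ((x + |φ - θ| + y) / 54) ^ 2 ≤ distSq (1 - x) θ p := by
  have hy : 0 ≤ y := by linarith [hp.1.1, hp.1.2]
  have hp₂ := abs_sub_le_of_mem_polarBox hp
  rw [abs_sub_comm] at hp₂
  have hφp := abs_sub_le φ p.2 θ
  have hψ : |p.2 - θ| ≤ π := abs_le.2 ⟨by linarith [hp.2.1], by linarith [hp.2.2]⟩
  refine le_trans (pow_le_pow_left₀ (by positivity) ?_ 2) (sq_le_distSq hx hx'
    ⟨by linarith [hp.1.1], by linarith [hp.1.2]⟩ hψ)
  nlinarith [hp.1.2, pi_lt_d2, abs_nonneg (p.2 - θ)]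

end Tiles

section TileIntegrals

open Real

variable {x y θ φ l s B C : ℝ} {p q : ℝ × ℝ} {E : Type*} [NormedAddCommGroup E] [NormedSpace ℝ E]
  {G h : ℝ × ℝ → E} {A : ℝ → ℝ → E}

lemma norm_inv_distSq_sq_le (hl : 0 < l) (hdist : l ^ 2 ≤ distSq s θ p) :
    ‖(distSq s θ p ^ 2)⁻¹‖ ≤ (l ^ 4)⁻¹ := by
  rw [Real.norm_of_nonneg (by positivity), show l ^ 4 = (l ^ 2) ^ 2 by ring]
  gcongr

lemma norm_setIntegral_inv_distSq_sq_smul_le [CompleteSpace E] (hs : 0 ≤ s) (hs' : s ≤ 1)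
    (hp : 0 ≤ p.1) (hq : q.1 ≤ 1) (hpq : p ≤ q) (hl : 0 < l)
    (hdist : ∀ r ∈ Icc p q, l ^ 2 ≤ distSq s θ r) (hfst : q.1 - p.1 ≤ 27 * l)
    (hsnd : q.2 - p.2 ≤ 216 * l) (hG : IntegrableOn G (Ioc p.1 q.1 ×ˢ Ioc p.2 q.2))
    (hB : ∀ r ∈ Icc p q, ‖∫ x in Ioc p.1 r.1 ×ˢ Ioc p.2 r.2, G x‖ ≤ B) :
    ‖∫ r in Ioc p.1 q.1 ×ˢ Ioc p.2 q.2, (distSq s θ r ^ 2)⁻¹ • G r‖ ≤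
      165000 * (l ^ 4)⁻¹ * B := by
  have hB0 : 0 ≤ B := (norm_nonneg _).trans (hB q (right_mem_Icc.2 hpq))
  have hsnd₀ : 0 ≤ q.2 - p.2 := sub_nonneg.2 hpq.2
  have hs_abs : |s| ≤ 1 := by rwa [abs_of_nonneg hs]
  have hsr (r : ℝ × ℝ) (hr : r ∈ Icc p q) : |s * r.1| ≤ 1 := by
    have hr₁ : 0 ≤ r.1 := hp.trans hr.1.1
    rw [abs_of_nonneg (mul_nonneg hs hr₁)]
    exact mul_le_one₀ hs' hr₁ (hr.2.1.trans hq)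
  have hne (r : ℝ × ℝ) (hr : r ∈ Icc p q) : distSq s θ r ≠ 0 :=
    ((pow_pos hl 2).trans_le (hdist r hr)).ne'
  have H := ((hasMixedDerivOn_distSq s θ).mono (subset_univ _)).inv_sq
    (continuous_distSq s θ).continuousOn hne
  refine (H.norm_setIntegral_smul_le_of_bound hpq hG hB
    (norm_inv_distSq_sq_le hl (hdist q (right_mem_Icc.2 hpq)))
    (fun r hr ↦ abs_neg_two_mul_inv_cube_mul_le hl (hdist r hr) (abs_distSq_deriv_fst_le hs_abs))
    (fun r hr ↦ abs_neg_two_mul_inv_cube_mul_le hl (hdist r hr)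
      (abs_distSq_deriv_snd_le (hsr r hr)))
    (fun r hr ↦ abs_six_mul_inv_pow_mul_sub_le hl (hdist r hr) (abs_distSq_deriv_fst_le hs_abs)
      (abs_distSq_deriv_snd_le (hsr r hr)) (abs_distSq_deriv_fst_snd_le hs_abs _))).trans
    (mul_le_mul_of_nonneg_right ?_ hB0)
  calc _ ≤ (l ^ 4)⁻¹ + 4 * (l ^ 5)⁻¹ * (27 * l) + 4 * (l ^ 5)⁻¹ * (216 * l) +
        28 * (l ^ 6)⁻¹ * (27 * l * (216 * l)) := by gcongr
    _ ≤ 165000 * (l ^ 4)⁻¹ := by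
        field_simp
        norm_num

lemma continuousOn_inv_distSq_sq (hl : 0 < l) {T : Set (ℝ × ℝ)}
    (hdist : ∀ r ∈ T, l ^ 2 ≤ distSq s θ r) : ContinuousOn (fun r ↦ (distSq s θ r ^ 2)⁻¹) T :=
  ((continuous_distSq s θ).pow 2).continuousOn.inv₀ fun r hr ↦
    pow_ne_zero 2 ((pow_pos hl 2).trans_le (hdist r hr)).ne'

lemma integrableOn_inv_distSq_sq_smul (hl : 0 < l) {T : Set (ℝ × ℝ)} (hT : MeasurableSet T)
    (hdist : ∀ r ∈ T, l ^ 2 ≤ distSq s θ r) (hG : IntegrableOn G T) :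
    IntegrableOn (fun r ↦ (distSq s θ r ^ 2)⁻¹ • G r) T :=
  hG.bdd_smul (l ^ 4)⁻¹ ((continuousOn_inv_distSq_sq hl hdist).aestronglyMeasurable hT)
    (ae_restrict_of_forall_mem hT fun r hr ↦ norm_inv_distSq_sq_le hl (hdist r hr))

lemma PolarBWMO.norm_setIntegral_polarTile_smul_sub_le [CompleteSpace E] (H : PolarBWMO h A C)
    (hx : 0 < x) (hx' : x ≤ 1 / 2) (hy : 0 < y) (hy' : y ≤ 1 / 2) (hl : 0 < l) (hyl : y ≤ 54 * l)
    (hdist : ∀ r ∈ polarBox y φ, l ^ 2 ≤ distSq (1 - x) θ r) :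
    ‖∫ p in polarTile y φ, (distSq (1 - x) θ p ^ 2)⁻¹ • (h p - p.1 • A y φ)‖ ≤
      165000 * (l ^ 4)⁻¹ * (C * y ^ 2) := by
  have hyπ : 0 ≤ π * y := by positivity
  rw [polarBox_eq_Icc] at hdist
  refine norm_setIntegral_inv_distSq_sq_smul_le (p := (1 - y, φ)) (q := (1 - y / 2, φ + π * y))
    (by linarith) (by linarith) (by linarith) (by linarith) ⟨by linarith, by linarith⟩ hl hdist
    (by linarith) (by nlinarith [pi_lt_four])
    (H.integrableOn_sub _ (by linarith) (by linarith) (by nlinarith [pi_pos])) fun r hr ↦ ?_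
  exact H.norm_setIntegral_le hy hy' (by rwa [polarBox_eq_Icc])

lemma norm_setIntegral_polarTile_smul_const_le (hy : 0 ≤ y) (hy' : y ≤ 1) (hl : 0 < l)
    (hdist : ∀ r ∈ polarBox y φ, l ^ 2 ≤ distSq s θ r) (v : E) :
    ‖∫ p in polarTile y φ, (distSq s θ p ^ 2)⁻¹ • p.1 • v‖ ≤
      (l ^ 4)⁻¹ * ‖v‖ * volume.real (polarTile y φ) := by
  refine norm_setIntegral_le_of_norm_le_const volume_polarTile_lt_top fun p hp ↦ ?_
  have hpbox := polarTile_subset_polarBox hp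
  have hp₁ : ‖p.1‖ ≤ 1 := by
    rw [Real.norm_of_nonneg (by linarith [hpbox.1.1])]
    linarith [hpbox.1.2]
  rw [norm_smul, norm_smul]
  exact mul_le_mul (norm_inv_distSq_sq_le hl (hdist p hpbox))
    (mul_le_of_le_one_left (norm_nonneg v) hp₁) (by positivity) (by positivity)

end TileIntegrals

section Majorant

open Real

variable {x y θ φ C : ℝ} {p : ℝ × ℝ} {E : Type*} [NormedAddCommGroup E] [NormedSpace ℝ E]
  {h : ℝ × ℝ → E} {A : ℝ → ℝ → E}

/-- An integrable function dominating, on each tile at distance comparable to `L` from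
`(1 - x) e^{iθ}` and of width `y`, the kernel `L⁻⁴` times the bound `√(L / x) + √(L / y)` for the
difference of the averages over the two boxes. -/
noncomputable def tileMajorant (x θ : ℝ) (p : ℝ × ℝ) : ℝ :=
  ((x + |p.2 - θ|) ^ 2)⁻¹ *
    (((x + (1 - p.1)) * √(x + (1 - p.1)))⁻¹ * ((√x)⁻¹ + (√(1 - p.1))⁻¹))

lemma continuousOn_tileMajorant (hx : 0 < x) (θ : ℝ) :
    ContinuousOn (tileMajorant x θ) {p | p.1 < 1} := by
  have hpos {p : ℝ × ℝ} (hp : p ∈ {p : ℝ × ℝ | p.1 < 1}) : 0 < 1 - p.1 := sub_pos.2 hp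
  unfold tileMajorant
  refine .mul (.inv₀ (by fun_prop) fun p _ ↦ by positivity)
    (.mul (.inv₀ (by fun_prop) fun p hp ↦ ?_)
      (.add continuousOn_const (.inv₀ (by fun_prop) fun p hp ↦ ?_)))
  · have := hpos hp
    positivity
  · have := hpos hp
    positivity

lemma integrableOn_tileMajorant_polarTile (hx : 0 < x) (hy : 0 < y) (θ φ : ℝ) :
    IntegrableOn (tileMajorant x θ) (polarTile y φ) :=
  (((continuousOn_tileMajorant hx θ).mono fun p hp ↦ show p.1 < 1 by linarith [hp.1.2])
    |>.integrableOn_compact (isCompact_Icc.prod isCompact_Icc)).mono_set polarTile_subset_polarBox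

lemma inv_mul_sqrt_add_sqrt_eq {L : ℝ} (hx : 0 < x) (hy : 0 < y) (hL : 0 < L) :
    (25 * L ^ 4)⁻¹ * (√(L / x) + √(L / y)) =
      ((5 * L) ^ 2)⁻¹ * ((L * √L)⁻¹ * ((√x)⁻¹ + (√y)⁻¹)) := by
  obtain ⟨r, hr, rfl⟩ : ∃ r, 0 < r ∧ L = r ^ 2 := ⟨√L, sqrt_pos.2 hL, (sq_sqrt hL.le).symm⟩
  rw [sqrt_div' _ hx.le, sqrt_div' _ hy.le, sqrt_sq hr.le]
  field_simp
  norm_num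

lemma le_tileMajorant_of_mem_polarTile (hx : 0 < x) (hy : 0 < y) (hp : p ∈ polarTile y φ) :
    (25 * (x + |φ - θ| + y) ^ 4)⁻¹ * (√((x + |φ - θ| + y) / x) + √((x + |φ - θ| + y) / y)) ≤
      tileMajorant x θ p := by
  have hL := abs_sub_add_le_of_mem_polarBox (θ := θ) hx.le (polarTile_subset_polarBox hp)
  have hL0 : 0 ≤ |φ - θ| := abs_nonneg _
  rw [inv_mul_sqrt_add_sqrt_eq hx hy (by positivity), tileMajorant]
  have hp₁ : 0 < 1 - p.1 := by linarith [hp.1.2]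
  have hy_le : 1 - p.1 ≤ y := by linarith [hp.1.1]
  gcongr
  · linarith
  · linarith

lemma le_setIntegral_tileMajorant (hx : 0 < x) (hy : 0 < y) :
    (25 * (x + |φ - θ| + y) ^ 4)⁻¹ * (√((x + |φ - θ| + y) / x) + √((x + |φ - θ| + y) / y)) *
      volume.real (polarTile y φ) ≤ ∫ p in polarTile y φ, tileMajorant x θ p := by
  rw [mul_comm, ← smul_eq_mul, ← setIntegral_const]
  exact setIntegral_mono_on (integrableOn_const volume_polarTile_lt_top.ne)
    (integrableOn_tileMajorant_polarTile hx hy θ φ) measurableSet_polarTile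
    fun p hp ↦ le_tileMajorant_of_mem_polarTile hx hy hp

lemma PolarBWMO.norm_setIntegral_polarTile_smul_sub_le_add [CompleteSpace E] {l : ℝ}
    (H : PolarBWMO h A C) (hx : 0 < x) (hx' : x ≤ 1 / 2) (hy : 0 < y) (hy' : y ≤ 1 / 2) (hl : 0 < l)
    (hyl : y ≤ 54 * l) (hdist : ∀ r ∈ polarBox y φ, l ^ 2 ≤ distSq (1 - x) θ r) :
    ‖∫ p in polarTile y φ, (distSq (1 - x) θ p ^ 2)⁻¹ • (h p - p.1 • A x θ)‖ ≤
      165000 * (l ^ 4)⁻¹ * (C * y ^ 2) +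
        (l ^ 4)⁻¹ * ‖A y φ - A x θ‖ * volume.real (polarTile y φ) := by
  have hdist' (r : ℝ × ℝ) (hr : r ∈ polarTile y φ) := hdist r (polarTile_subset_polarBox hr)
  have hsplit (p : ℝ × ℝ) : (distSq (1 - x) θ p ^ 2)⁻¹ • (h p - p.1 • A x θ) =
      (distSq (1 - x) θ p ^ 2)⁻¹ • (h p - p.1 • A y φ) +
        (distSq (1 - x) θ p ^ 2)⁻¹ • p.1 • (A y φ - A x θ) := by
    rw [← smul_add, smul_sub p.1, sub_add_sub_cancel]
  have hint : IntegrableOn (fun p ↦ h p - p.1 • A y φ) (polarTile y φ) :=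
    H.integrableOn_sub _ (by linarith) (by linarith) (by nlinarith [pi_pos])
  simp only [hsplit]
  rw [integral_add (integrableOn_inv_distSq_sq_smul hl measurableSet_polarTile hdist' hint)
    (integrableOn_inv_distSq_sq_smul hl measurableSet_polarTile hdist'
      (integrableOn_fst_smul_const _ _ _ _ _))]
  exact norm_add_le_of_le
    (H.norm_setIntegral_polarTile_smul_sub_le hx hx' hy hy' hl hyl hdist)
    (norm_setIntegral_polarTile_smul_const_le hy.le (by linarith) hl hdist _)

lemma PolarBWMO.norm_setIntegral_polarTile_le [CompleteSpace E] (H : PolarBWMO h A C) (hx : 0 < x)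
    (hx' : x ≤ 1 / 2) (hy : 0 < y) (hy' : y ≤ 1 / 2) (hφ : θ - π ≤ φ) (hφ' : φ + π * y ≤ θ + π) :
    ‖∫ p in polarTile y φ, (distSq (1 - x) θ p ^ 2)⁻¹ • (h p - p.1 • A x θ)‖ ≤
      10 ^ 14 * C * ∫ p in polarTile y φ, tileMajorant x θ p := by
  have hC := H.nonneg
  have hmaj := le_setIntegral_tileMajorant (θ := θ) (φ := φ) hx hy
  have htile := H.norm_setIntegral_polarTile_smul_sub_le_add (l := (x + |φ - θ| + y) / 54) hx hx' hy
    hy' (by positivity) (by linarith [abs_nonneg (φ - θ)])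
    fun r hr ↦ sq_le_distSq_of_mem_polarBox hx hx' hy' hφ hφ' hr
  have hA := H.norm_sub_le (x := y) (y := x) (θ := φ) (φ := θ) (L := x + |φ - θ| + y) hy hy' hx hx'
    (by linarith [abs_nonneg (φ - θ)]) (by linarith [abs_nonneg (φ - θ)]) (by linarith)
  have hL : x ≤ x + |φ - θ| + y := by linarith [abs_nonneg (φ - θ)]
  have hvol := sq_le_volume_real_polarTile (φ := φ) hy.le
  set L := x + |φ - θ| + y
  set V := volume.real (polarTile y φ)
  set S := √(L / x) + √(L / y) with hS
  have hL0 : 0 < L := hx.trans_le hL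
  have hS1 : 1 ≤ S := (one_le_sqrt.2 ((one_le_div hx).2 hL)).trans
    (le_add_of_nonneg_right (sqrt_nonneg _))
  rw [add_comm √(L / y)] at hA
  calc _ ≤ 165000 * ((L / 54) ^ 4)⁻¹ * (C * y ^ 2) + ((L / 54) ^ 4)⁻¹ * ‖A y φ - A x θ‖ * V := htile
    _ ≤ 165000 * ((L / 54) ^ 4)⁻¹ * (C * (S * V)) + ((L / 54) ^ 4)⁻¹ * (288 * C * S) * V := by
        gcongr
        nlinarith [sq_nonneg y]
    _ = (165288 * 54 ^ 4 * 25) * C * ((25 * L ^ 4)⁻¹ * S * V) := by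
        field_simp
        norm_num
    _ ≤ 10 ^ 14 * C * ∫ p in polarTile y φ, tileMajorant x θ p := by
        gcongr
        norm_num

end Majorant

section TileSums

variable {E : Type*} [NormedAddCommGroup E] [NormedSpace ℝ E] {F : ℝ × ℝ → E} {g : ℝ × ℝ → ℝ}
  {T : Set ℝ}

lemma norm_setIntegral_prod_Ioc_le_of_forall_lt {c δ : ℝ} (hT : MeasurableSet T) (hδ : 0 ≤ δ)
    (k : ℕ) (hF : IntegrableOn F (T ×ˢ Ioc c (c + k * δ)))
    (hg : IntegrableOn g (T ×ˢ Ioc c (c + k * δ)))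
    (hFg : ∀ i < k, ‖∫ p in T ×ˢ Ioc (c + i * δ) (c + i * δ + δ), F p‖ ≤
      ∫ p in T ×ˢ Ioc (c + i * δ) (c + i * δ + δ), g p) :
    ‖∫ p in T ×ˢ Ioc c (c + k * δ), F p‖ ≤ ∫ p in T ×ˢ Ioc c (c + k * δ), g p := by
  induction k with
  | zero => simp
  | succ k ih =>
    have hsucc : c + (k + 1 : ℕ) * δ = c + k * δ + δ := by
      push_cast
      ring
    have hck : c ≤ c + k * δ := le_add_of_nonneg_right (by positivity)
    have hle : c + k * δ ≤ c + k * δ + δ := le_add_of_nonneg_right hδ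
    have hsub : T ×ˢ Ioc c (c + k * δ) ⊆ T ×ˢ Ioc c (c + k * δ + δ) :=
      prod_mono subset_rfl (Ioc_subset_Ioc_right hle)
    rw [hsucc] at hF hg ⊢
    rw [setIntegral_prod_Ioc_eq_add hT hck hle hF, setIntegral_prod_Ioc_eq_add hT hck hle hg]
    exact norm_add_le_of_le
      (ih (hF.mono_set hsub) (hg.mono_set hsub) fun i hi ↦ hFg i (hi.trans k.lt_succ_self))
      (hFg k k.lt_succ_self)

lemma norm_setIntegral_Ioc_prod_le_of_forall_lt {a : ℕ → ℝ} (hT : MeasurableSet T) (ha : Monotone a)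
    (n : ℕ) (hF : IntegrableOn F (Ioc (a 0) (a n) ×ˢ T))
    (hg : IntegrableOn g (Ioc (a 0) (a n) ×ˢ T))
    (hFg : ∀ i < n, ‖∫ p in Ioc (a i) (a (i + 1)) ×ˢ T, F p‖ ≤
      ∫ p in Ioc (a i) (a (i + 1)) ×ˢ T, g p) :
    ‖∫ p in Ioc (a 0) (a n) ×ˢ T, F p‖ ≤ ∫ p in Ioc (a 0) (a n) ×ˢ T, g p := by
  induction n with
  | zero => simp
  | succ n ih =>
    have h0 : a 0 ≤ a n := ha n.zero_le
    have hle : a n ≤ a (n + 1) := ha n.le_succ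
    have hsub : Ioc (a 0) (a n) ×ˢ T ⊆ Ioc (a 0) (a (n + 1)) ×ˢ T :=
      prod_mono (Ioc_subset_Ioc_right hle) subset_rfl
    rw [setIntegral_Ioc_prod_eq_add hT h0 hle hF, setIntegral_Ioc_prod_eq_add hT h0 hle hg]
    exact norm_add_le_of_le
      (ih (hF.mono_set hsub) (hg.mono_set hsub) fun i hi ↦ hFg i (hi.trans n.lt_succ_self))
      (hFg n n.lt_succ_self)

end TileSums

section MajorantIntegral

open Real

variable {x b : ℝ}

lemma setIntegral_Ioc_inv_add_abs_sub_sq_le (hx : 0 < x) (θ : ℝ) :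
    ∫ φ in Ioc (θ - π) (θ + π), ((x + |φ - θ|) ^ 2)⁻¹ ≤ 2 / x := by
  have hcont : Continuous fun φ : ℝ ↦ ((x + |φ - θ|) ^ 2)⁻¹ :=
    .inv₀ (by fun_prop) fun φ ↦ by positivity
  have hleft : ∫ φ in (θ - π)..θ, ((x + |φ - θ|) ^ 2)⁻¹ = x⁻¹ - (x + π)⁻¹ := by
    rw [intervalIntegral.integral_eq_sub_of_hasDerivAt (f := fun φ ↦ (x - (φ - θ))⁻¹)
      (fun φ hφ ↦ ?_) (hcont.intervalIntegrable _ _)]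
    · simp
    · rw [uIcc_of_le (by linarith [pi_pos])] at hφ
      rw [abs_of_nonpos (by linarith [hφ.2])]
      refine ((((hasDerivAt_id φ).sub_const θ).const_sub x).inv ?_).congr_deriv
        (by simp [sub_eq_add_neg])
      exact (by simpa using by linarith [hφ.2] : (0 : ℝ) < x - (id φ - θ)).ne'
  have hright : ∫ φ in θ..(θ + π), ((x + |φ - θ|) ^ 2)⁻¹ = x⁻¹ - (x + π)⁻¹ := by
    rw [intervalIntegral.integral_eq_sub_of_hasDerivAt (f := fun φ ↦ -(x + (φ - θ))⁻¹)
      (fun φ hφ ↦ ?_) (hcont.intervalIntegrable _ _)]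
    · simp [neg_add_eq_sub]
    · rw [uIcc_of_le (by linarith [pi_pos])] at hφ
      rw [abs_of_nonneg (by linarith [hφ.1])]
      refine ((((hasDerivAt_id φ).sub_const θ).const_add x).inv ?_).neg.congr_deriv
        (by simp [neg_div])
      exact (by simpa using by linarith [hφ.1] : (0 : ℝ) < x + (id φ - θ)).ne'
  rw [← intervalIntegral.integral_of_le (by linarith [pi_pos]),
    ← intervalIntegral.integral_add_adjacent_intervals (b := θ) (hcont.intervalIntegrable _ _)
      (hcont.intervalIntegrable _ _), hleft, hright, div_eq_mul_inv]
  have : 0 < (x + π)⁻¹ := by positivity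
  linarith

lemma hasDerivAt_radial_primitive {t : ℝ} (hx : 0 < x) (ht : t < 1) :
    HasDerivAt (fun t ↦ 2 / √x * (√(x + (1 - t)))⁻¹ - 2 / x * (√(1 - t) / √(x + (1 - t))))
      (((x + (1 - t)) * √(x + (1 - t)))⁻¹ * ((√x)⁻¹ + (√(1 - t))⁻¹)) t := by
  have ht₀ : 0 < 1 - t := sub_pos.2 ht
  have hr : HasDerivAt (fun t : ℝ ↦ √(1 - t)) (-1 / (2 * √(1 - t))) t :=
    ((hasDerivAt_id t).const_sub 1).sqrt ht₀.ne'
  have hw : HasDerivAt (fun t : ℝ ↦ √(x + (1 - t))) (-1 / (2 * √(x + (1 - t)))) t :=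
    (((hasDerivAt_id t).const_sub 1).const_add x).sqrt (by positivity)
  have hr₀ : 0 < √(1 - t) := sqrt_pos.2 ht₀
  have hw₀ : 0 < √(x + (1 - t)) := sqrt_pos.2 (by positivity)
  refine (((hw.inv hw₀.ne').const_mul (2 / √x)).sub
    ((hr.div hw hw₀.ne').const_mul (2 / x))).congr_deriv ?_
  have hw_sq : √(x + (1 - t)) ^ 2 = x + (1 - t) := sq_sqrt (by positivity)
  have hx_eq : x = √(x + (1 - t)) ^ 2 - √(1 - t) ^ 2 := by
    rw [hw_sq, sq_sqrt ht₀.le]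
    ring
  rw [← hw_sq]
  simp only [sqrt_sq hw₀.le]
  have hx₀ : 0 < √x := sqrt_pos.2 hx
  generalize √x = X at *
  generalize √(1 - t) = r at *
  generalize √(x + (1 - t)) = w at *
  have : w ^ 2 - r ^ 2 ≠ 0 := hx_eq ▸ hx.ne'
  rw [hx_eq]
  field_simp
  ring

lemma setIntegral_Ioc_radial_le (hx : 0 < x) (hb : 1 / 2 ≤ b) (hb' : b < 1) :
    ∫ t in Ioc (1 / 2) b, ((x + (1 - t)) * √(x + (1 - t)))⁻¹ * ((√x)⁻¹ + (√(1 - t))⁻¹) ≤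
      4 / x := by
  have hlt {t : ℝ} (ht : t ∈ uIcc (1 / 2) b) : t < 1 := by
    rw [uIcc_of_le hb] at ht
    exact ht.2.trans_lt hb'
  rw [← intervalIntegral.integral_of_le hb, intervalIntegral.integral_eq_sub_of_hasDerivAt
    (fun t ht ↦ hasDerivAt_radial_primitive hx (hlt ht)) (ContinuousOn.intervalIntegrable
      (.mul (.inv₀ (by fun_prop) fun t ht ↦ ?_) (continuousOn_const.add
        (.inv₀ (by fun_prop) fun t ht ↦ ?_))))]
  · have hupper : 2 / √x * (√(x + (1 - b)))⁻¹ ≤ 2 / x := calc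
      _ ≤ 2 / √x * (√x)⁻¹ := by
        gcongr
        linarith
      _ = 2 / x := by rw [← div_eq_mul_inv, div_div, mul_self_sqrt hx.le]
    have hlower : 2 / x * (√(1 - 1 / 2) / √(x + (1 - 1 / 2))) ≤ 2 / x :=
      mul_le_of_le_one_right (by positivity)
        (div_le_one_of_le₀ (sqrt_le_sqrt (by linarith)) (sqrt_nonneg _))
    have hb_nonneg : 0 ≤ 2 / x * (√(1 - b) / √(x + (1 - b))) := by positivity
    have hhalf_nonneg : 0 ≤ 2 / √x * (√(x + (1 - 1 / 2)))⁻¹ := by positivity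
    have : 4 / x = 2 / x + 2 / x := by ring
    linarith
  · have : 0 < 1 - t := sub_pos.2 (hlt ht)
    positivity
  · have : 0 < 1 - t := sub_pos.2 (hlt ht)
    positivity

lemma setIntegral_tileMajorant_le (hx : 0 < x) (hb : 1 / 2 ≤ b) (hb' : b < 1) (θ : ℝ) :
    ∫ p in Ioc (1 / 2) b ×ˢ Ioc (θ - π) (θ + π), tileMajorant x θ p ≤ 8 / x ^ 2 := by
  have hprod := setIntegral_prod_mul (μ := (volume : Measure ℝ)) (ν := (volume : Measure ℝ))
    (fun t ↦ ((x + (1 - t)) * √(x + (1 - t)))⁻¹ * ((√x)⁻¹ + (√(1 - t))⁻¹))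
    (fun φ ↦ ((x + |φ - θ|) ^ 2)⁻¹) (Ioc (1 / 2) b) (Ioc (θ - π) (θ + π))
  simp only [tileMajorant, mul_comm (((x + |_|) ^ 2)⁻¹)]
  rw [Measure.volume_eq_prod, hprod]
  calc _ ≤ 4 / x * (2 / x) :=
        mul_le_mul (setIntegral_Ioc_radial_le hx hb hb')
          (setIntegral_Ioc_inv_add_abs_sub_sq_le hx θ)
          (integral_nonneg fun φ ↦ by positivity) (by positivity)
    _ = 8 / x ^ 2 := by ring

end MajorantIntegral

section AnnulusIntegral

open Real Filter Topology

variable {x y θ b C : ℝ} {E : Type*} [NormedAddCommGroup E] [NormedSpace ℝ E]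
  {h : ℝ × ℝ → E} {A : ℝ → ℝ → E}

lemma integrableOn_tileMajorant (hx : 0 < x) (a : ℝ) (hb : b < 1) (c d θ : ℝ) :
    IntegrableOn (tileMajorant x θ) (Ioc a b ×ˢ Ioc c d) :=
  (((continuousOn_tileMajorant hx θ).mono fun p hp ↦ show p.1 < 1 from hp.1.2.trans_lt hb)
    |>.integrableOn_compact (isCompact_Icc.prod isCompact_Icc)).mono_set
      (prod_mono Ioc_subset_Icc_self Ioc_subset_Icc_self)

/-- The radii `1 - 2⁻ⁿ⁻¹`, which cut the annulus `1/2 < |z| < 1` into rings that are a whole number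
of tiles around. -/
noncomputable def dyadicRadius (n : ℕ) : ℝ := 1 - 1 / 2 * (1 / 2) ^ n

lemma dyadicRadius_zero : dyadicRadius 0 = 1 / 2 := by norm_num [dyadicRadius]

lemma dyadicRadius_lt_one (n : ℕ) : dyadicRadius n < 1 := sub_lt_self 1 (by positivity)

lemma monotone_dyadicRadius : Monotone dyadicRadius := fun _ _ hmn ↦
  sub_le_sub_left (mul_le_mul_of_nonneg_left
    (pow_le_pow_of_le_one (by norm_num) (by norm_num) hmn) (by norm_num)) 1

lemma tendsto_dyadicRadius : Tendsto dyadicRadius atTop (𝓝 1) := by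
  have hpow := tendsto_pow_atTop_nhds_zero_of_lt_one (r := (1 / 2 : ℝ)) (by norm_num) (by norm_num)
  simpa only [dyadicRadius, mul_zero, sub_zero] using! (hpow.const_mul (1 / 2)).const_sub 1

lemma iUnion_Ioc_dyadicRadius : ⋃ n, Ioc (1 / 2) (dyadicRadius n) = Ioo (1 / 2) 1 := by
  refine subset_antisymm (iUnion_subset fun n ↦ Ioc_subset_Ioo le_rfl (dyadicRadius_lt_one n))
    fun t ht ↦ ?_
  obtain ⟨n, hn⟩ := (tendsto_dyadicRadius.eventually (lt_mem_nhds ht.2)).exists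
  exact mem_iUnion.2 ⟨n, ht.1, hn.le⟩

namespace PolarBWMO

lemma integrableOn_inv_distSq_sq_smul (H : PolarBWMO h A C) (hx : 0 < x) (hx' : x ≤ 1 / 2)
    (θ : ℝ) (v : E) :
    IntegrableOn (fun p ↦ (distSq (1 - x) θ p ^ 2)⁻¹ • (h p - p.1 • v))
      (Ioo (1 / 2) 1 ×ˢ Ioc (θ - π) (θ + π)) := by
  have hh := H.integrableOn (θ - π)
  rw [show θ - π + 2 * π = θ + π by ring] at hh
  refine _root_.integrableOn_inv_distSq_sq_smul (l := x / 6) (by positivity)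
    (measurableSet_Ioo.prod measurableSet_Ioc) (fun p hp ↦ ?_)
    (hh.sub ((integrableOn_fst_smul_const (1 / 2) 1 _ _ v).mono_set
      (prod_mono Ioo_subset_Ioc_self subset_rfl)))
  have hp₂ : |p.2 - θ| ≤ π := abs_le.2 ⟨by linarith [hp.2.1], by linarith [hp.2.2]⟩
  refine le_trans ?_ (sq_le_distSq hx hx' ⟨hp.1.1.le, hp.1.2.le⟩ hp₂)
  gcongr
  linarith [abs_nonneg (p.2 - θ), hp.1.2]

variable [CompleteSpace E]

lemma norm_setIntegral_ring_le (H : PolarBWMO h A C) (hx : 0 < x) (hx' : x ≤ 1 / 2) (hy : 0 < y)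
    (hy' : y ≤ 1 / 2) {k : ℕ} (hk : k * y = 2) :
    ‖∫ p in Ioc (1 - y) (1 - y / 2) ×ˢ Ioc (θ - π) (θ + π),
        (distSq (1 - x) θ p ^ 2)⁻¹ • (h p - p.1 • A x θ)‖ ≤
      ∫ p in Ioc (1 - y) (1 - y / 2) ×ˢ Ioc (θ - π) (θ + π),
        10 ^ 14 * C * tileMajorant x θ p := by
  have hθ : θ + π = θ - π + k * (π * y) := by linear_combination -π * hk
  have hint := (H.integrableOn_inv_distSq_sq_smul hx hx' θ (A x θ)).mono_set
    (prod_mono (Ioc_subset_Ioo (by linarith : 1 / 2 ≤ 1 - y) (by linarith : 1 - y / 2 < 1))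
      subset_rfl)
  have hmaj := (integrableOn_tileMajorant hx (1 - y) (by linarith : 1 - y / 2 < 1) (θ - π) (θ + π)
    θ).const_mul (10 ^ 14 * C)
  rw [hθ] at hint hmaj ⊢
  refine norm_setIntegral_prod_Ioc_le_of_forall_lt measurableSet_Ioc (by positivity) k hint hmaj
    fun i hi ↦ ?_
  rw [integral_const_mul]
  have hi' : (i + 1 : ℝ) * (π * y) ≤ k * (π * y) := by
    gcongr
    exact_mod_cast hi
  refine H.norm_setIntegral_polarTile_le hx hx' hy hy' ?_ ?_
  · exact le_add_of_nonneg_right (by positivity)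
  · linarith

lemma norm_setIntegral_dyadicRadius_le (H : PolarBWMO h A C) (hx : 0 < x) (hx' : x ≤ 1 / 2)
    (n : ℕ) :
    ‖∫ p in Ioc (1 / 2) (dyadicRadius n) ×ˢ Ioc (θ - π) (θ + π),
        (distSq (1 - x) θ p ^ 2)⁻¹ • (h p - p.1 • A x θ)‖ ≤ 10 ^ 14 * C * (8 / x ^ 2) := by
  have hC := H.nonneg
  have hlt := dyadicRadius_lt_one n
  have hint := (H.integrableOn_inv_distSq_sq_smul hx hx' θ (A x θ)).mono_set
    (prod_mono (Ioc_subset_Ioo dyadicRadius_zero.ge hlt) subset_rfl)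
  have hmaj := (integrableOn_tileMajorant hx (dyadicRadius 0) hlt (θ - π) (θ + π) θ).const_mul
    (10 ^ 14 * C)
  have hring (i : ℕ) := H.norm_setIntegral_ring_le (θ := θ) hx hx' (y := 1 / 2 * (1 / 2) ^ i)
    (by positivity) (mul_le_of_le_one_right (by norm_num) (pow_le_one₀ (by norm_num) (by norm_num)))
    (k := 2 ^ (i + 2)) (by
      rw [Nat.cast_pow, Nat.cast_ofNat, pow_add, div_pow, one_pow]
      field_simp)
  have hsucc (i : ℕ) : 1 - 1 / 2 * (1 / 2) ^ i / 2 = dyadicRadius (i + 1) := by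
    rw [dyadicRadius]
    ring
  simp only [hsucc] at hring
  have hsum := norm_setIntegral_Ioc_prod_le_of_forall_lt measurableSet_Ioc monotone_dyadicRadius n
    hint hmaj fun i _ ↦ hring i
  rw [dyadicRadius_zero, integral_const_mul] at hsum
  exact hsum.trans (mul_le_mul_of_nonneg_left (setIntegral_tileMajorant_le hx
    (dyadicRadius_zero ▸ monotone_dyadicRadius n.zero_le) hlt θ) (by positivity))

lemma norm_setIntegral_annulus_le (H : PolarBWMO h A C) (hx : 0 < x) (hx' : x ≤ 1 / 2) (θ : ℝ) :
    ‖∫ p in Ioo (1 / 2) 1 ×ˢ Ioc (θ - π) (θ + π),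
        (distSq (1 - x) θ p ^ 2)⁻¹ • (h p - p.1 • A x θ)‖ ≤ 10 ^ 14 * C * (8 / x ^ 2) := by
  have hint := H.integrableOn_inv_distSq_sq_smul hx hx' θ (A x θ)
  rw [← iUnion_Ioc_dyadicRadius, iUnion_prod_const] at hint ⊢
  exact le_of_tendsto (tendsto_setIntegral_of_monotone
    (fun n ↦ measurableSet_Ioc.prod measurableSet_Ioc)
    (fun m n hmn ↦ prod_mono (Ioc_subset_Ioc_right (monotone_dyadicRadius hmn)) subset_rfl)
    hint).norm (.of_forall fun n ↦ H.norm_setIntegral_dyadicRadius_le hx hx' n)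

end PolarBWMO

end AnnulusIntegral

section BerezinKernel

open ComplexConjugate

lemma setIntegral_image_of_hasDerivAt {E : Type*} [NormedAddCommGroup E] [NormedSpace ℝ E]
    {g g' : ℂ → ℂ} {s : Set ℂ} (hs : MeasurableSet s) (hg : ∀ w ∈ s, HasDerivAt g (g' w) w)
    (hinj : InjOn g s) (F : ℂ → E) :
    ∫ w in g '' s, F w = ∫ w in s, ‖g' w‖ ^ 2 • F (g w) := by
  rw [integral_image_eq_integral_abs_det_fderiv_smul volume hs
    (fun w hw ↦ ((hg w hw).hasFDerivAt.restrictScalars ℝ).hasFDerivWithinAt) hinj]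
  simp [ContinuousLinearMap.det, LinearMap.det_restrictScalars, Algebra.norm_complex_eq,
    Complex.normSq_eq_norm_sq]

/-- The involutive automorphism of the unit disc exchanging `0` and `z`. -/
noncomputable def discInvolution (z w : ℂ) : ℂ := (z - w) / (1 - w * conj z)

/-- The squared modulus `|k_z(w)|²` of the normalized Bergman kernel. -/
noncomputable def berezinKernel (z w : ℂ) : ℝ := (1 - ‖z‖ ^ 2) ^ 2 / ‖1 - w * conj z‖ ^ 4

variable {z w : ℂ}

lemma norm_mul_conj_lt_one (hz : z ∈ unitDisc) (hw : w ∈ unitDisc) : ‖w * conj z‖ < 1 := by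
  rw [norm_mul, RCLike.norm_conj]
  exact mul_lt_one_of_nonneg_of_lt_one_left (norm_nonneg _) hw hz.le

lemma one_sub_mul_conj_ne_zero (hz : z ∈ unitDisc) (hw : w ∈ unitDisc) : 1 - w * conj z ≠ 0 :=
  sub_ne_zero.2 fun h ↦ (norm_mul_conj_lt_one hz hw).ne (by rw [← h, norm_one])

lemma discInvolution_mem_unitDisc (hz : z ∈ unitDisc) (hw : w ∈ unitDisc) :
    discInvolution z w ∈ unitDisc := by
  have hne := norm_pos_iff.2 (one_sub_mul_conj_ne_zero hz hw)
  have hz' : ‖z‖ ^ 2 < 1 := (sq_lt_one_iff₀ (norm_nonneg z)).2 hz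
  have hw' : ‖w‖ ^ 2 < 1 := (sq_lt_one_iff₀ (norm_nonneg w)).2 hw
  have hid : ‖1 - w * conj z‖ ^ 2 - ‖z - w‖ ^ 2 = (1 - ‖z‖ ^ 2) * (1 - ‖w‖ ^ 2) := by
    simp only [← Complex.normSq_eq_norm_sq, Complex.normSq_apply, Complex.sub_re, Complex.sub_im,
      Complex.mul_re, Complex.mul_im, Complex.conj_re, Complex.conj_im, Complex.one_re,
      Complex.one_im]
    ring
  rw [unitDisc, mem_ofPred_eq, discInvolution, norm_div, div_lt_one hne]
  refine lt_of_pow_lt_pow_left₀ 2 hne.le (sub_pos.1 ?_)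
  rw [hid]
  exact mul_pos (sub_pos.2 hz') (sub_pos.2 hw')

lemma discInvolution_discInvolution (hz : z ∈ unitDisc) (hw : w ∈ unitDisc) :
    discInvolution z (discInvolution z w) = w := by
  have hne := one_sub_mul_conj_ne_zero hz hw
  have hzz := one_sub_mul_conj_ne_zero hz hz
  have hne' : 1 - discInvolution z w * conj z = (1 - z * conj z) / (1 - w * conj z) := by
    rw [discInvolution]
    field_simp
    ring
  rw [discInvolution, hne', discInvolution]
  field_simp
  ring

lemma image_discInvolution_unitDisc (hz : z ∈ unitDisc) :
    discInvolution z '' unitDisc = unitDisc :=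
  subset_antisymm (image_subset_iff.2 fun _ ↦ discInvolution_mem_unitDisc hz) fun _ hw ↦
    ⟨_, discInvolution_mem_unitDisc hz hw, discInvolution_discInvolution hz hw⟩

lemma injOn_discInvolution (hz : z ∈ unitDisc) : InjOn (discInvolution z) unitDisc :=
  LeftInvOn.injOn fun _ ↦ discInvolution_discInvolution hz

lemma hasDerivAt_discInvolution (hz : z ∈ unitDisc) (hw : w ∈ unitDisc) :
    HasDerivAt (discInvolution z) (-(1 - z * conj z) / (1 - w * conj z) ^ 2) w := by
  refine (((hasDerivAt_id w).const_sub z).div (((hasDerivAt_id w).mul_const (conj z)).const_sub 1)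
    (one_sub_mul_conj_ne_zero hz hw)).congr_deriv ?_
  simp only [id]
  ring

lemma norm_discInvolution_deriv_sq (z w : ℂ) :
    ‖-(1 - z * conj z) / (1 - w * conj z) ^ 2‖ ^ 2 = berezinKernel z w := by
  rw [Complex.mul_conj, Complex.normSq_eq_norm_sq, norm_div, norm_neg, norm_pow, berezinKernel,
    div_pow, ← pow_mul, ← Complex.ofReal_one, ← Complex.ofReal_sub, Complex.norm_real,
    Real.norm_eq_abs, sq_abs]

lemma unitDisc_eq_ball : unitDisc = Metric.ball 0 1 := by
  ext
  simp [unitDisc]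

lemma measurableSet_unitDisc : MeasurableSet unitDisc :=
  unitDisc_eq_ball ▸ measurableSet_ball

lemma dA_unitDisc : dA unitDisc = 1 := by
  rw [dA, Measure.smul_apply, unitDisc_eq_ball, Complex.volume_ball, ← NNReal.coe_real_pi,
    ENNReal.ofReal_coe_nnreal, ENNReal.ofReal_one, one_pow, one_mul, smul_eq_mul]
  exact ENNReal.inv_mul_cancel (by exact_mod_cast NNReal.pi_ne_zero) ENNReal.coe_ne_top

lemma setIntegral_berezinKernel (hz : z ∈ unitDisc) :
    ∫ w in unitDisc, berezinKernel z w ∂dA = 1 := by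
  have hcov := setIntegral_image_of_hasDerivAt measurableSet_unitDisc
    (fun _ ↦ hasDerivAt_discInvolution hz) (injOn_discInvolution hz) fun _ ↦ (1 : ℝ)
  simp only [image_discInvolution_unitDisc hz, norm_discInvolution_deriv_sq, smul_eq_mul,
    mul_one] at hcov
  rw [setIntegral_dA, ← hcov, ← setIntegral_dA, setIntegral_const, measureReal_def, dA_unitDisc,
    ENNReal.toReal_one, one_smul]

end BerezinKernel

section BoundedDifference

open ComplexConjugate

variable {f : ℂ → ℂ} {z w : ℂ} {r s x θ φ : ℝ}

lemma norm_setIntegral_Bzz_le {C : ℝ} (hz : z ∈ unitDisc) (hw : wQuot f z w ≤ C) :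
    ‖∫ ξ in Bzz z w, (f ξ - avg f z) ∂dA‖ ≤ |C| * (1 - ‖z‖) ^ 2 := by
  have hpos : 0 < (dA (Bz z)).toReal :=
    (div_pos (pow_pos (sub_pos.2 hz) 2) (by norm_num)).trans_le (sq_div_eight_le_toReal_dA_Bz hz)
  rw [wQuot, inv_mul_le_iff₀ hpos] at hw
  calc _ ≤ (dA (Bz z)).toReal * |C| :=
        hw.trans (mul_le_mul_of_nonneg_left (le_abs_self C) hpos.le)
    _ ≤ |C| * (1 - ‖z‖) ^ 2 := by
        rw [mul_comm]
        gcongr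
        exact toReal_dA_Bz_le hz

lemma polarMap_mem_Bz {q : ℝ × ℝ} (hx : x < 1) (hq : q ∈ polarBox x θ) :
    polarMap q ∈ Bz (polarMap (1 - x, θ)) := by
  rw [Bz_polarMap (sub_pos.2 hx), sub_sub_cancel, polarRect_eq_image]
  exact mem_image_of_mem _ hq

lemma IsBWMO.exists_norm_setIntegral_polarMap_le (hb : IsBWMO f) :
    ∃ C, ∀ ⦃x θ : ℝ⦄, 0 < x → x ≤ 1 / 2 → ∀ q ∈ polarBox x θ,
      ‖∫ p in Ioc (1 - x) q.1 ×ˢ Ioc θ q.2,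
        (p.1 • f (polarMap p) - p.1 • avg f (polarMap (1 - x, θ)))‖ ≤ C * x ^ 2 := by
  obtain ⟨C, hC⟩ := hb
  refine ⟨Real.pi * |C|, fun x θ hx hx' q hq ↦ ?_⟩
  have hx₁ : 0 < 1 - x := by linarith
  have hπ := Real.pi_pos
  have hnorm : ‖polarMap (1 - x, θ)‖ = 1 - x := norm_polarMap hx₁.le
  have hz : polarMap (1 - x, θ) ∈ unitDisc := by
    rw [unitDisc, mem_ofPred_eq, hnorm]
    linarith
  have hq₂ : q.2 ≤ θ + Real.pi / 2 := hq.2.2.trans (by nlinarith)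
  have hbound := norm_setIntegral_Bzz_le hz (hC _ hz _ (polarMap_mem_Bz (by linarith) hq))
  rw [Bzz_polarMap hx₁ (hx₁.trans_le hq.1.1) hq.2.1 (by linarith),
    setIntegral_polarRect_dA hx₁.le (by linarith), hnorm, sub_sub_cancel, norm_smul, norm_inv,
    Real.norm_of_nonneg hπ.le, inv_mul_le_iff₀ hπ] at hbound
  simpa only [smul_sub, mul_assoc] using hbound

lemma IsBWMO.exists_polarBWMO (hf : IntegrableOn f unitDisc dA) (hb : IsBWMO f) :
    ∃ C, PolarBWMO (fun p ↦ p.1 • f (polarMap p)) (fun x θ ↦ avg f (polarMap (1 - x, θ))) C := by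
  obtain ⟨C, hC⟩ := hb.exists_norm_setIntegral_polarMap_le
  refine ⟨max C (32 * ∫ w in unitDisc, ‖f w‖ ∂dA), ⟨fun c ↦ ?_, fun hx hx' q hq ↦ ?_, fun θ ↦ ?_⟩⟩
  · exact (integrableOn_annulus_iff (by norm_num) 1 c).1 (hf.mono_set fun w hw ↦ hw.2)
  · exact (hC hx hx' q hq).trans (by gcongr; exact le_max_left _ _)
  · have hnorm : ‖polarMap (1 - 1 / 2, θ)‖ = 1 / 2 :=
      (norm_polarMap (by norm_num)).trans (by norm_num)
    have hz : polarMap (1 - 1 / 2, θ) ∈ unitDisc := by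
      rw [unitDisc, mem_ofPred_eq, hnorm]
      norm_num
    have havg := norm_avg_le hf hz
    rw [hnorm] at havg
    exact (havg.trans (by norm_num)).trans (le_max_right _ _)

lemma berezinKernel_nonneg (z w : ℂ) : 0 ≤ berezinKernel z w := by
  unfold berezinKernel
  positivity

lemma norm_berezinKernel_le (hz : z ∈ unitDisc) (hw : ‖w‖ ≤ r) (hr : r ≤ 1) :
    ‖berezinKernel z w‖ ≤ (1 - ‖z‖ ^ 2) ^ 2 / (1 - r * ‖z‖) ^ 4 := by
  have hz' : ‖z‖ < 1 := hz
  have hpos : 0 < 1 - r * ‖z‖ := by nlinarith [norm_nonneg z]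
  have hle : 1 - r * ‖z‖ ≤ ‖1 - w * conj z‖ := by
    refine le_trans ?_ (norm_sub_norm_le 1 (w * conj z))
    rw [norm_one, norm_mul, RCLike.norm_conj]
    gcongr
  rw [Real.norm_of_nonneg (berezinKernel_nonneg z w), berezinKernel]
  gcongr

lemma continuousOn_berezinKernel (hz : z ∈ unitDisc) :
    ContinuousOn (berezinKernel z) unitDisc :=
  continuousOn_const.div (by fun_prop) fun _ hw ↦
    pow_ne_zero 4 (norm_ne_zero_iff.2 (one_sub_mul_conj_ne_zero hz hw))

lemma integrableOn_berezinKernel_smul {E : Type*} [NormedAddCommGroup E] [NormedSpace ℝ E]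
    {F : ℂ → E} (hz : z ∈ unitDisc) (hF : IntegrableOn F unitDisc dA) :
    IntegrableOn (fun w ↦ berezinKernel z w • F w) unitDisc dA :=
  hF.bdd_smul _ ((continuousOn_berezinKernel hz).aestronglyMeasurable measurableSet_unitDisc)
    (ae_restrict_of_forall_mem measurableSet_unitDisc fun _ hw ↦
      norm_berezinKernel_le hz (le_of_lt hw) le_rfl)

lemma berezin_eq_setIntegral (f : ℂ → ℂ) (z : ℂ) :
    berezin f z = ∫ w in unitDisc, berezinKernel z w • f w ∂dA := by
  simp only [berezin, Complex.real_smul, berezinKernel, mul_comm (f _)]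

lemma integrableOn_unitDisc_const {E : Type*} [NormedAddCommGroup E] (v : E) :
    IntegrableOn (fun _ ↦ v) unitDisc dA :=
  integrableOn_const (by simp [dA_unitDisc])

lemma berezin_sub_eq_setIntegral (hf : IntegrableOn f unitDisc dA) (hz : z ∈ unitDisc) (v : ℂ) :
    berezin f z - v = ∫ w in unitDisc, berezinKernel z w • (f w - v) ∂dA := by
  have hconst : ∫ w in unitDisc, berezinKernel z w • v ∂dA = v := by
    rw [integral_smul_const, setIntegral_berezinKernel hz, one_smul]
  simp only [smul_sub]
  rw [integral_sub (integrableOn_berezinKernel_smul hz hf)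
    (integrableOn_berezinKernel_smul hz (integrableOn_unitDisc_const v)), hconst,
    berezin_eq_setIntegral]

lemma norm_setIntegral_berezinKernel_smul_le (hf : IntegrableOn f unitDisc dA)
    (hz : z ∈ unitDisc) (hr : r ≤ 1) {T : Set ℂ} (hT : MeasurableSet T) (hTD : T ⊆ unitDisc)
    (hTr : ∀ w ∈ T, ‖w‖ ≤ r) :
    ‖∫ w in T, berezinKernel z w • f w ∂dA‖ ≤
      (1 - ‖z‖ ^ 2) ^ 2 / (1 - r * ‖z‖) ^ 4 * ∫ w in unitDisc, ‖f w‖ ∂dA := by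
  refine (norm_integral_le_of_norm_le ((hf.mono_set hTD).norm.const_mul _)
    (ae_restrict_of_forall_mem hT fun w hw ↦ (norm_smul_le _ _).trans
      (mul_le_mul_of_nonneg_right (norm_berezinKernel_le hz (hTr w hw) hr)
        (norm_nonneg _)))).trans ?_
  rw [integral_const_mul]
  exact mul_le_mul_of_nonneg_left (setIntegral_mono_set hf.norm (.of_forall fun _ ↦ norm_nonneg _)
    hTD.eventuallyLE) (by positivity)

lemma norm_one_sub_polarMap_mul_conj_sq (s θ : ℝ) (p : ℝ × ℝ) :
    ‖1 - polarMap p * conj (polarMap (s, θ))‖ ^ 2 = distSq s θ p := by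
  have hmul : polarMap p * conj (polarMap (s, θ)) =
      ((s * p.1 : ℝ) : ℂ) * Complex.exp ((p.2 - θ : ℝ) * Complex.I) := by
    simp only [polarMap, map_mul, Complex.conj_ofReal, ← Complex.exp_conj, Complex.conj_I]
    push_cast
    rw [sub_mul, sub_eq_add_neg, Complex.exp_add, mul_neg]
    ring
  rw [hmul, ← Complex.normSq_eq_norm_sq, Complex.normSq_apply, distSq]
  simp only [Complex.sub_re, Complex.sub_im, Complex.one_re, Complex.one_im, Complex.re_ofReal_mul,
    Complex.im_ofReal_mul, Complex.exp_ofReal_mul_I_re, Complex.exp_ofReal_mul_I_im]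
  linear_combination (s * p.1) ^ 2 * Real.sin_sq_add_cos_sq (p.2 - θ)

lemma berezinKernel_polarMap (hs : 0 ≤ s) (θ : ℝ) (p : ℝ × ℝ) :
    berezinKernel (polarMap (s, θ)) (polarMap p) =
      (1 - s ^ 2) ^ 2 * (distSq s θ p ^ 2)⁻¹ := by
  rw [← norm_one_sub_polarMap_mul_conj_sq, ← pow_mul, berezinKernel, norm_polarMap hs,
    div_eq_mul_inv]

lemma norm_setIntegral_annulus_berezinKernel_le {C : ℝ} {A : ℝ → ℝ → ℂ}
    (H : PolarBWMO (fun p ↦ p.1 • f (polarMap p)) A C) (hx : 0 < x) (hx' : x ≤ 1 / 2) (θ : ℝ) :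
    ‖∫ w in annulus (1 / 2) 1, berezinKernel (polarMap (1 - x, θ)) w • (f w - A x θ) ∂dA‖ ≤
      32 * 10 ^ 14 * C := by
  have hpi : Real.pi⁻¹ ≤ 1 := inv_le_one_of_one_le₀ (by linarith [Real.pi_gt_three])
  have hpolar (p : ℝ × ℝ) :
      p.1 • berezinKernel (polarMap (1 - x, θ)) (polarMap p) • (f (polarMap p) - A x θ) =
        (1 - (1 - x) ^ 2) ^ 2 •
          ((distSq (1 - x) θ p ^ 2)⁻¹ • (p.1 • f (polarMap p) - p.1 • A x θ)) := by
    rw [berezinKernel_polarMap (by linarith), ← smul_sub, smul_smul, smul_smul, smul_smul]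
    ring_nf
  have hsq : (1 - (1 - x) ^ 2) ^ 2 ≤ (2 * x) ^ 2 :=
    pow_le_pow_left₀ (by nlinarith) (by linarith [sq_nonneg x]) 2
  rw [setIntegral_annulus_dA (by norm_num) 1 (θ - Real.pi),
    show θ - Real.pi + 2 * Real.pi = θ + Real.pi by ring]
  simp only [hpolar]
  rw [integral_smul, norm_smul, norm_smul, Real.norm_of_nonneg (inv_nonneg.2 Real.pi_nonneg),
    Real.norm_of_nonneg (sq_nonneg _)]
  calc _ ≤ 1 * ((2 * x) ^ 2 * (10 ^ 14 * C * (8 / x ^ 2))) := by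
        gcongr
        exact H.norm_setIntegral_annulus_le hx hx' θ
    _ = 32 * 10 ^ 14 * C := by
        field_simp
        ring

lemma setIntegral_norm_sub_le (hf : IntegrableOn f unitDisc dA) (v : ℂ) :
    ∫ w in unitDisc, ‖f w - v‖ ∂dA ≤ (∫ w in unitDisc, ‖f w‖ ∂dA) + ‖v‖ := by
  have hconst : ∫ _ in unitDisc, ‖v‖ ∂dA = ‖v‖ := by
    simp [measureReal_def, dA_unitDisc]
  conv_rhs => rw [← hconst]
  rw [← integral_add hf.norm (integrableOn_unitDisc_const _)]
  exact integral_mono (hf.sub (integrableOn_unitDisc_const v)).norm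
    (hf.norm.add (integrableOn_unitDisc_const _)) fun w ↦ norm_sub_le _ _

lemma norm_setIntegral_closedBall_berezinKernel_le (hf : IntegrableOn f unitDisc dA)
    (hz : z ∈ unitDisc) :
    ‖∫ w in Metric.closedBall 0 (1 / 2), berezinKernel z w • (f w - avg f z) ∂dA‖ ≤
      576 * ∫ w in unitDisc, ‖f w‖ ∂dA := by
  have hx : 0 < 1 - ‖z‖ := sub_pos.2 hz
  have hmass := (setIntegral_norm_sub_le hf (avg f z)).trans
    (add_le_add_right (norm_avg_le hf hz) _)
  have hker : (1 - ‖z‖ ^ 2) ^ 2 / (1 - 1 / 2 * ‖z‖) ^ 4 ≤ 64 * (1 - ‖z‖) ^ 2 := by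
    rw [div_le_iff₀ (pow_pos (by linarith) 4)]
    calc (1 - ‖z‖ ^ 2) ^ 2 = (1 - ‖z‖) ^ 2 * (1 + ‖z‖) ^ 2 := by ring
      _ ≤ (1 - ‖z‖) ^ 2 * 2 ^ 2 := by gcongr; linarith
      _ = 64 * (1 - ‖z‖) ^ 2 * (1 / 2) ^ 4 := by ring
      _ ≤ 64 * (1 - ‖z‖) ^ 2 * (1 - 1 / 2 * ‖z‖) ^ 4 := by gcongr; linarith
  have hsub : Metric.closedBall (0 : ℂ) (1 / 2) ⊆ unitDisc :=
    unitDisc_eq_ball ▸ Metric.closedBall_subset_ball (by norm_num)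
  calc _ ≤ _ := norm_setIntegral_berezinKernel_smul_le
        (hf.sub (integrableOn_unitDisc_const (avg f z))) hz (r := 1 / 2) (by norm_num)
        measurableSet_closedBall hsub fun w hw ↦ mem_closedBall_zero_iff.1 hw
    _ ≤ 64 * (1 - ‖z‖) ^ 2 * ((∫ w in unitDisc, ‖f w‖ ∂dA) +
          8 / (1 - ‖z‖) ^ 2 * ∫ w in unitDisc, ‖f w‖ ∂dA) := by
        gcongr
        exact hmass
    _ = 64 * ((1 - ‖z‖) ^ 2 + 8) * ∫ w in unitDisc, ‖f w‖ ∂dA := by field_simp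
    _ ≤ 64 * (1 + 8) * ∫ w in unitDisc, ‖f w‖ ∂dA := by
        gcongr
        exact pow_le_one₀ hx.le (by linarith [norm_nonneg z])
    _ = 576 * ∫ w in unitDisc, ‖f w‖ ∂dA := by norm_num

lemma unitDisc_eq_closedBall_union_annulus :
    unitDisc = Metric.closedBall 0 (1 / 2) ∪ annulus (1 / 2) 1 := by
  ext w
  simp only [unitDisc, annulus, mem_union, mem_closedBall_zero_iff, mem_ofPred_eq]
  grind

lemma measurableSet_annulus (a b : ℝ) : MeasurableSet (annulus a b) :=
  (measurableSet_lt measurable_const measurable_norm).inter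
    (measurableSet_lt measurable_norm measurable_const)

lemma disjoint_closedBall_annulus (a b : ℝ) :
    Disjoint (Metric.closedBall 0 a) (annulus a b) :=
  disjoint_left.2 fun _ hw hw' ↦ (mem_closedBall_zero_iff.1 hw).not_gt hw'.1

lemma norm_berezin_sub_avg_le_of_norm_le_half (hf : IntegrableOn f unitDisc dA)
    (hz : ‖z‖ ≤ 1 / 2) :
    ‖berezin f z - avg f z‖ ≤ 48 * ∫ w in unitDisc, ‖f w‖ ∂dA := by
  have hz₁ : z ∈ unitDisc := hz.trans_lt (by norm_num)
  have hker : (1 - ‖z‖ ^ 2) ^ 2 / (1 - 1 * ‖z‖) ^ 4 ≤ 16 := by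
    calc _ ≤ (1 : ℝ) ^ 2 / (1 / 2) ^ 4 := by
          gcongr
          · nlinarith [norm_nonneg z]
          · linarith [sq_nonneg ‖z‖]
          · linarith
      _ = 16 := by norm_num
  have hx : 8 / (1 - ‖z‖) ^ 2 ≤ 32 := by
    calc _ ≤ (8 : ℝ) / (1 / 2) ^ 2 := by
          gcongr
          linarith
      _ = 32 := by norm_num
  have hberezin := norm_setIntegral_berezinKernel_smul_le hf hz₁ le_rfl measurableSet_unitDisc
    subset_rfl fun _ hw ↦ le_of_lt hw
  rw [← berezin_eq_setIntegral] at hberezin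
  calc _ ≤ 16 * (∫ w in unitDisc, ‖f w‖ ∂dA) + 32 * ∫ w in unitDisc, ‖f w‖ ∂dA :=
        norm_sub_le_of_le (hberezin.trans (by gcongr)) ((norm_avg_le hf hz₁).trans (by gcongr))
    _ = 48 * ∫ w in unitDisc, ‖f w‖ ∂dA := by ring

lemma norm_berezin_sub_avg_le_of_half_le_norm {C : ℝ} (hf : IntegrableOn f unitDisc dA)
    (H : PolarBWMO (fun p ↦ p.1 • f (polarMap p)) (fun x θ ↦ avg f (polarMap (1 - x, θ))) C)
    (hz : z ∈ unitDisc) (hz' : 1 / 2 ≤ ‖z‖) :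
    ‖berezin f z - avg f z‖ ≤ 576 * (∫ w in unitDisc, ‖f w‖ ∂dA) + 32 * 10 ^ 14 * C := by
  have hpolar : polarMap (1 - (1 - ‖z‖), theta z) = z := by
    rw [sub_sub_cancel, polarMap_norm_theta]
  have hannulus :=
    norm_setIntegral_annulus_berezinKernel_le H (sub_pos.2 hz) (by linarith) (theta z)
  simp only [hpolar] at hannulus
  have hint := integrableOn_berezinKernel_smul hz (hf.sub (integrableOn_unitDisc_const (avg f z)))
  simp only [Pi.sub_apply] at hint
  rw [unitDisc_eq_closedBall_union_annulus] at hint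
  rw [berezin_sub_eq_setIntegral hf hz]
  conv_lhs => rw [unitDisc_eq_closedBall_union_annulus]
  rw [setIntegral_union (disjoint_closedBall_annulus _ _) (measurableSet_annulus _ _)
    hint.left_of_union hint.right_of_union]
  exact norm_add_le_of_le (norm_setIntegral_closedBall_berezinKernel_le hf hz) hannulus

lemma IsBWMO.exists_norm_berezin_sub_avg_le (hf : IntegrableOn f unitDisc dA) (hb : IsBWMO f) :
    ∃ C, ∀ z ∈ unitDisc, ‖berezin f z - avg f z‖ ≤ C := by
  obtain ⟨C, H⟩ := hb.exists_polarBWMO hf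
  refine ⟨576 * (∫ w in unitDisc, ‖f w‖ ∂dA) + 32 * 10 ^ 14 * C, fun z hz ↦ ?_⟩
  obtain hz' | hz' := le_total ‖z‖ (1 / 2)
  · have hC := H.nonneg
    have hI : 0 ≤ ∫ w in unitDisc, ‖f w‖ ∂dA := by positivity
    linarith [norm_berezin_sub_avg_le_of_norm_le_half hf hz']
  · exact norm_berezin_sub_avg_le_of_half_le_norm hf H hz hz'

end BoundedDifference

/-- For `f ∈ L¹(𝔻, dA)` satisfying the BWMO condition, the average
function `f̂` is bounded on `𝔻` if and only if the Berezin transform `f̃` is bounded on `𝔻`. -/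
theorem avg_bounded_iff_berezin_bounded (f : ℂ → ℂ)
    (hf : MeasureTheory.IntegrableOn f unitDisc dA) (hbwmo : IsBWMO f) :
    (∃ M : ℝ, ∀ z ∈ unitDisc, ‖avg f z‖ ≤ M) ↔
      (∃ M : ℝ, ∀ z ∈ unitDisc, ‖berezin f z‖ ≤ M) := by
  obtain ⟨C, hC⟩ := hbwmo.exists_norm_berezin_sub_avg_le hf
  constructor
  · rintro ⟨M, hM⟩
    exact ⟨M + C, fun z hz ↦
      (norm_le_norm_add_norm_sub' _ _).trans (add_le_add (hM z hz) (hC z hz))⟩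
  · rintro ⟨M, hM⟩
    exact ⟨M + C, fun z hz ↦
      (norm_le_norm_add_norm_sub _ _).trans (add_le_add (hM z hz) (hC z hz))⟩
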